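/- arXiv:2601.21195 — 2 statements merged into one kernel-verified Lean document; each statement's English description precedes it below -/
import Mathlib

section
/- Let n ≥ 1, let q ≥ 1 be real, and let x_1,…,x_n be positive reals with x_1+⋯+x_n = 1. For π ∈ S_n define Ψ(q,x)_π = q^{−inv(π)} · [∏_{k=1, k∈LRM(π)}^{n−1} κ(π_k;x)] · [∏_{k=1, k∉LRM(π)}^{n−1} ( κ(π_{p_k},…,π_k;x) − q^{−1}·κ(π_{p_k},…,π_{k−1};x) )] / ∏_{k=1}^{n−1} ( κ(w_0;x) − q^{k−n−1}·κ(π_1,…,π_{k−1};x) ). Then every factor occurring in this product formula is strictly positive (each factor κ(π_k;x), each factor κ(π_{p_k},…,π_k;x) − q^{−1}κ(π_{p_k},…,π_{k−1};x), and each denominator factor κ(w_0;x) − q^{k−n−1}κ(π_1,…,π_{k−1};x)), and moreover ∑_{π∈S_n} Ψ(q,x)_π = 1. -/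
/-!
STATEMENT 1: positivity of the factors of the stationary-distribution formula for the
q-Tsetlin library on permutations, and normalization of the formula.
-/

open scoped Classical

noncomputable section

namespace QTsetlin

variable {K : Type} [Field K]

/-- Number of inversions of a permutation (one-line notation `i ↦ π i`). -/
def invCount {n : ℕ} (π : Equiv.Perm (Fin n)) : ℕ :=
  (Finset.univ.filter fun p : Fin n × Fin n => p.1 < p.2 ∧ π p.2 < π p.1).card

/-- `κ(b; x)`: sort the tuple `b` weakly decreasingly, obtaining `(b_1 ≥ ⋯ ≥ b_k)`, and form
`∑_i x_{b_i} q^{i + b_i - k - 1}` (1-based positions and values; here values are 0-based). -/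
def kappa {n : ℕ} (q : K) (x : Fin n → K) (b : List (Fin n)) : K :=
  let s := b.insertionSort (fun a c => c ≤ a)
  ∑ i : Fin s.length, x (s.get i) * q ^ ((i : ℤ) + ((s.get i : ℕ) + 1) - s.length)

/-- `k` is the (0-based) position of a left-to-right minimum of `π`. -/
def isLRM {n : ℕ} (π : Equiv.Perm (Fin n)) (k : Fin n) : Prop :=
  ∀ i : Fin n, i < k → π k < π i

/-- `p_k`: the smallest (0-based) position `i < k` with `π_i < π_k`. -/
def pMin {n : ℕ} (π : Equiv.Perm (Fin n)) (k : Fin n) : ℕ :=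
  sInf {i : ℕ | ∃ h : i < n, (⟨i, h⟩ : Fin n) < k ∧ π ⟨i, h⟩ < π k}

/-- The tuple of values `(π_{p_k}, …, π_k)`. -/
def segTo {n : ℕ} (π : Equiv.Perm (Fin n)) (k : Fin n) : List (Fin n) :=
  ((List.finRange n).filter fun i : Fin n =>
    decide (pMin π k ≤ (i : ℕ) ∧ (i : ℕ) ≤ (k : ℕ))).map π

/-- The tuple of values `(π_{p_k}, …, π_{k-1})`. -/
def segBefore {n : ℕ} (π : Equiv.Perm (Fin n)) (k : Fin n) : List (Fin n) :=
  ((List.finRange n).filter fun i : Fin n =>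
    decide (pMin π k ≤ (i : ℕ) ∧ (i : ℕ) < (k : ℕ))).map π

/-- The tuple of values `(π_1, …, π_{k-1})` (the values at positions strictly before `k`). -/
def prefixVals {n : ℕ} (π : Equiv.Perm (Fin n)) (k : Fin n) : List (Fin n) :=
  ((List.finRange n).filter fun i : Fin n => decide (i < k)).map π

/-- The stationary distribution formula for the q-Tsetlin library on permutations.
Note `kappa q x (List.finRange n) = κ(w₀; x)`. -/
def psiFormula (n : ℕ) (q : K) (x : Fin n → K) (π : Equiv.Perm (Fin n)) : K :=
  q ^ (-(invCount π : ℤ)) *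
    ((∏ k ∈ Finset.univ.filter fun k : Fin n => (k : ℕ) + 1 < n ∧ isLRM π k,
        kappa q x [π k]) *
      (∏ k ∈ Finset.univ.filter fun k : Fin n => (k : ℕ) + 1 < n ∧ ¬ isLRM π k,
        (kappa q x (segTo π k) - q⁻¹ * kappa q x (segBefore π k)))) /
    (∏ k ∈ Finset.univ.filter fun k : Fin n => (k : ℕ) + 1 < n,
      (kappa q x (List.finRange n) - q ^ (((k : ℕ) : ℤ) - (n : ℤ)) * kappa q x (prefixVals π k)))

/-!
Reading `π` from left to right, the formula is the probability of drawing `π` letter by letter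
without repetition. With `e(b)` the number of letters smaller than `b` that are not in `S`,
one has `κ(S) = ∑_{b ∈ S} x_b q^{e(b)}`, and for `b ∉ S`
`κ(S ∪ {b}) - q⁻¹ κ(S) = x_b q^{e(b)} + (1 - q⁻¹) ∑_{c ∈ S, c < b} x_c q^{e(c)}`.
This is positive and depends only on the part of `S` below `b`. Hence at every position, whether
or not it is a left-to-right minimum, the numerator factor equals the same expression with `S` the
set of all earlier letters. Weighting by `q^{-e(b)}` and summing over `b ∉ S`, the geometric sums
telescope to the denominator factor `∑ x - q^{-(n - |S|)} κ(S)`, so these ratios are the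
probabilities of the next letter, while `∑ e(π_k)` along `π` is the number of inversions.
-/

section LinearOrder

variable {α : Type*} [LinearOrder α]

lemma sum_filter_le_card_filter_lt {M : Type*} [AddCommMonoid M] (f : ℕ → M) (T : Finset α)
    (c : α) :
    ∑ b ∈ T with c ≤ b, f (T.filter (· < b)).card =
      ∑ j ∈ Finset.Ico (T.filter (· < c)).card T.card, f j := by
  induction T using Finset.induction_on_max with
  | empty => simp
  | insert a T ha ih =>
    have haT : a ∉ T := fun h => (ha a h).false
    rcases le_or_gt c a with hca | hac
    · have filter_lt_eq : ∀ b ≤ a, (insert a T).filter (· < b) = T.filter (· < b) := fun b hb => by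
        rw [Finset.filter_insert, if_neg hb.not_gt]
      have hsum : ∑ b ∈ T with c ≤ b, f ((insert a T).filter (· < b)).card =
          ∑ b ∈ T with c ≤ b, f (T.filter (· < b)).card :=
        Finset.sum_congr rfl fun b hb => by
          rw [filter_lt_eq b (ha b (Finset.mem_filter.1 hb).1).le]
      rw [Finset.filter_insert, if_pos hca, Finset.sum_insert (by simp [haT]), hsum, ih,
        filter_lt_eq a le_rfl, filter_lt_eq c hca, Finset.filter_true_of_mem ha,
        Finset.card_insert_of_notMem haT, Finset.sum_Ico_succ_top (Finset.card_filter_le _ _),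
        add_comm]
    · have hlt : ∀ b ∈ insert a T, b < c := fun b hb =>
        (Finset.mem_insert.1 hb).elim (fun h => h ▸ hac) fun h => (ha b h).trans hac
      rw [Finset.filter_true_of_mem hlt,
        Finset.filter_false_of_mem fun b hb => (hlt b hb).not_ge]
      simp

lemma card_filter_lt_get {s : List α} (hs : s.SortedGT) (i : Fin s.length) :
    (s.toFinset.filter (· < s.get i)).card = s.length - 1 - i := by
  have himage : s.toFinset.filter (· < s.get i) = (Finset.Ioi i).image s.get := by
    ext c
    simp only [Finset.mem_filter, List.mem_toFinset, Finset.mem_image, Finset.mem_Ioi]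
    constructor
    · rintro ⟨hc, hlt⟩
      obtain ⟨j, rfl⟩ := List.get_of_mem hc
      exact ⟨j, hs.strictAnti_get.lt_iff_gt.1 hlt, rfl⟩
    · rintro ⟨j, hij, rfl⟩
      exact ⟨List.get_mem s j, hs.strictAnti_get hij⟩
  rw [himage, Finset.card_image_of_injective _ hs.strictAnti_get.injective, Fin.card_Ioi]

variable [Fintype α]

/-- The number `e(b)` of letters smaller than `b` that do not occur in `S`: the exponent of `q`
attached to the letter `b` in `κ(S)`. -/
def gapsBelow (S : Finset α) (b : α) : ℕ :=
  (Sᶜ.filter (· < b)).card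

lemma gapsBelow_congr {S T : Finset α} {b : α} (h : ∀ c < b, (c ∈ S ↔ c ∈ T)) :
    gapsBelow S b = gapsBelow T b := by
  unfold gapsBelow
  congr 1
  ext c
  simp only [Finset.mem_filter, Finset.mem_compl]
  exact and_congr_left fun hc => not_congr (h c hc)

lemma gapsBelow_insert_of_le (S : Finset α) {b c : α} (hcb : c ≤ b) :
    gapsBelow (insert b S) c = gapsBelow S c :=
  gapsBelow_congr fun d hd => by simp [(hd.trans_le hcb).ne]

lemma gapsBelow_insert_add_one {S : Finset α} {b c : α} (hb : b ∉ S) (hbc : b < c) :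
    gapsBelow (insert b S) c + 1 = gapsBelow S c := by
  unfold gapsBelow
  rw [Finset.compl_insert, Finset.filter_erase, Finset.card_erase_add_one (by simp [hb, hbc])]

lemma sum_geom_gapsBelow {R : Type*} [CommRing R] (r : R) {S : Finset α} {c : α}
    (hc : c ∈ S) :
    ∑ b ∈ Sᶜ with c < b, (1 - r) * r ^ gapsBelow S b = r ^ gapsBelow S c - r ^ Sᶜ.card := by
  have hfilter : Sᶜ.filter (c < ·) = Sᶜ.filter (c ≤ ·) := Finset.filter_congr fun b hb =>
    ⟨le_of_lt, fun h => h.lt_of_ne fun hcb => Finset.mem_compl.1 hb (hcb ▸ hc)⟩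
  rw [hfilter, ← Finset.mul_sum]
  unfold gapsBelow
  rw [sum_filter_le_card_filter_lt, mul_comm, geom_sum_Ico_mul_neg _ (Finset.card_filter_le _ _)]

/-- The statistic `κ(b; x)` of a tuple of distinct letters, as a function of its underlying set. -/
def setKappa (q : K) (x : α → K) (S : Finset α) : K :=
  ∑ b ∈ S, x b * q ^ gapsBelow S b

/-- The increment `κ(S ∪ {b}) - q⁻¹ κ(S)`, which is the common form of all numerator factors. -/
def kappaIncr (q : K) (x : α → K) (S : Finset α) (b : α) : K :=
  setKappa q x (insert b S) - q⁻¹ * setKappa q x S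

/-- The deficit `κ(w₀) - q^{-(n - |S|)} κ(S)`, where `κ(w₀) = ∑ x`: the denominator factor at the
position preceded by the letters of `S`. -/
def kappaDeficit (q : K) (x : α → K) (S : Finset α) : K :=
  ∑ b, x b - q⁻¹ ^ Sᶜ.card * setKappa q x S

/-- The probability that the next letter is `b` once the letters of `S` have been drawn. -/
def nextProb (q : K) (x : α → K) (S : Finset α) (b : α) : K :=
  q⁻¹ ^ gapsBelow S b * kappaIncr q x S b / kappaDeficit q x S

lemma kappaIncr_eq {q : K} (hq : q ≠ 0) (x : α → K) {S : Finset α} {b : α} (hb : b ∉ S) :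
    kappaIncr q x S b =
      x b * q ^ gapsBelow S b + (1 - q⁻¹) * ∑ c ∈ S with c < b, x c * q ^ gapsBelow S c := by
  unfold kappaIncr setKappa
  rw [Finset.sum_insert hb, gapsBelow_insert_of_le S le_rfl, add_sub_assoc, Finset.mul_sum,
    ← Finset.sum_sub_distrib, Finset.mul_sum, Finset.sum_filter]
  congr 1
  refine Finset.sum_congr rfl fun c hc => ?_
  split_ifs with hcb
  · rw [gapsBelow_insert_of_le S hcb.le]
    ring
  · have hbc : b < c := (not_lt.1 hcb).lt_of_ne fun h => hb (h ▸ hc)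
    rw [← gapsBelow_insert_add_one hb hbc, pow_succ]
    field_simp
    ring

lemma kappaIncr_congr {q : K} (hq : q ≠ 0) (x : α → K) {S T : Finset α} {b : α} (hS : b ∉ S)
    (hT : b ∉ T) (h : ∀ c < b, (c ∈ S ↔ c ∈ T)) : kappaIncr q x S b = kappaIncr q x T b := by
  have hfilter : S.filter (· < b) = T.filter (· < b) := by
    ext c
    simp only [Finset.mem_filter]
    exact and_congr_left (h c)
  have hsum : ∑ c ∈ T with c < b, x c * q ^ gapsBelow S c =
      ∑ c ∈ T with c < b, x c * q ^ gapsBelow T c :=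
    Finset.sum_congr rfl fun c hc => by
      rw [gapsBelow_congr fun d hd => h d (hd.trans (Finset.mem_filter.1 hc).2)]
  rw [kappaIncr_eq hq x hS, kappaIncr_eq hq x hT, gapsBelow_congr h, hfilter, hsum]

lemma sum_compl_kappaIncr {q : K} (hq : q ≠ 0) (x : α → K) (S : Finset α) :
    ∑ b ∈ Sᶜ, q⁻¹ ^ gapsBelow S b * kappaIncr q x S b = kappaDeficit q x S := by
  have inv_pow_mul_pow (k : ℕ) : q⁻¹ ^ k * q ^ k = 1 := by
    rw [← mul_pow, inv_mul_cancel₀ hq, one_pow]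
  calc ∑ b ∈ Sᶜ, q⁻¹ ^ gapsBelow S b * kappaIncr q x S b
      = ∑ b ∈ Sᶜ, (x b + ∑ c ∈ S with c < b,
          x c * q ^ gapsBelow S c * ((1 - q⁻¹) * q⁻¹ ^ gapsBelow S b)) := by
        refine Finset.sum_congr rfl fun b hb => ?_
        rw [kappaIncr_eq hq x (Finset.mem_compl.1 hb), mul_add, mul_left_comm, inv_pow_mul_pow,
          mul_one, ← Finset.sum_mul]
        ring
    _ = ∑ b ∈ Sᶜ, x b + ∑ c ∈ S, x c * q ^ gapsBelow S c *
          ∑ b ∈ Sᶜ with c < b, (1 - q⁻¹) * q⁻¹ ^ gapsBelow S b := by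
        simp only [Finset.sum_add_distrib, Finset.mul_sum]
        congr 1
        exact Finset.sum_comm' fun b c => by simp only [Finset.mem_filter]; tauto
    _ = ∑ b ∈ Sᶜ, x b + ∑ c ∈ S, (x c - q⁻¹ ^ Sᶜ.card * (x c * q ^ gapsBelow S c)) := by
        congr 1
        refine Finset.sum_congr rfl fun c hc => ?_
        rw [sum_geom_gapsBelow _ hc]
        linear_combination x c * inv_pow_mul_pow (gapsBelow S c)
    _ = kappaDeficit q x S := by
        rw [Finset.sum_sub_distrib, ← Finset.mul_sum, ← add_sub_assoc, Finset.sum_compl_add_sum]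
        rfl

lemma sum_compl_nextProb {q : K} (hq : q ≠ 0) (x : α → K) {S : Finset α}
    (hS : kappaDeficit q x S ≠ 0) : ∑ b ∈ Sᶜ, nextProb q x S b = 1 := by
  unfold nextProb
  rw [← Finset.sum_div, sum_compl_kappaIncr hq, div_self hS]

lemma kappaIncr_eq_kappaDeficit {q : K} (hq : q ≠ 0) (x : α → K) {S : Finset α} {b : α}
    (hS : Sᶜ = {b}) : kappaIncr q x S b = kappaDeficit q x S := by
  have hgaps : gapsBelow S b = 0 := by simp [gapsBelow, hS, Finset.filter_singleton]
  simpa [hS, hgaps] using sum_compl_kappaIncr hq x S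

section Ordered

variable [LinearOrder K] [IsStrictOrderedRing K]

lemma kappaIncr_pos {q : K} (hq : 1 ≤ q) {x : α → K} (hx : ∀ a, 0 < x a) {S : Finset α} {b : α}
    (hb : b ∉ S) : 0 < kappaIncr q x S b := by
  have hq0 : 0 < q := zero_lt_one.trans_le hq
  rw [kappaIncr_eq hq0.ne' x hb]
  refine add_pos_of_pos_of_nonneg (mul_pos (hx b) (pow_pos hq0 _)) (mul_nonneg ?_ ?_)
  · exact sub_nonneg.2 (inv_le_one_of_one_le₀ hq)
  · exact Finset.sum_nonneg fun c _ => (mul_pos (hx c) (pow_pos hq0 _)).le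

lemma kappaDeficit_pos {q : K} (hq : 1 ≤ q) {x : α → K} (hx : ∀ a, 0 < x a) {S : Finset α}
    (hS : S ≠ Finset.univ) : 0 < kappaDeficit q x S := by
  have hq0 : 0 < q := zero_lt_one.trans_le hq
  rw [← sum_compl_kappaIncr hq0.ne' x S]
  exact Finset.sum_pos
    (fun b hb => mul_pos (by positivity) (kappaIncr_pos hq hx (Finset.mem_compl.1 hb)))
    (Finset.nonempty_iff_ne_empty.2 fun h => hS (Finset.compl_eq_empty_iff S |>.1 h))

end Ordered

end LinearOrder

section SequentialDraws

variable {α : Type*} [DecidableEq α] {m : ℕ}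

/-- The set of values taken by `f` at the positions before `k`: the letters drawn before the
`k`-th one. -/
def priorValues (f : Fin m → α) (k : Fin m) : Finset α :=
  (Finset.Iio k).image f

lemma apply_mem_priorValues_iff {f : Fin m → α} (hf : Function.Injective f) {j k : Fin m} :
    f j ∈ priorValues f k ↔ j < k := by
  simp [priorValues, hf.eq_iff]

lemma priorValues_castSucc (f : Fin (m + 1) → α) (k : Fin m) :
    priorValues f k.castSucc = priorValues (Fin.init f) k := by
  unfold priorValues
  rw [← Fin.map_castSuccEmb_Iio, Finset.map_eq_image, Finset.image_image]
  rfl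

lemma priorValues_last (f : Fin (m + 1) → α) :
    priorValues f (Fin.last m) = Finset.univ.image (Fin.init f) := by
  unfold priorValues
  rw [Fin.Iio_last_eq_map, Finset.map_eq_image, Finset.image_image]
  rfl

variable {R : Type*} [CommSemiring R]

lemma sum_injective_prod_priorValues [Fintype α] (w : Finset α → α → R)
    (hw : ∀ S : Finset α, S.card < m → ∑ b ∈ Sᶜ, w S b = 1) :
    ∑ f : Fin m → α with Function.Injective f, ∏ k, w (priorValues f k) (f k) = 1 := by
  induction m with
  | zero => simp [Function.injective_of_subsingleton]
  | succ m ih =>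
    rw [← ih fun S hS => hw S (hS.trans m.lt_succ_self), Finset.sum_filter, Finset.sum_filter,
      ← (Fin.snocEquiv fun _ => α).sum_comp, Fintype.sum_prod_type_right]
    refine Finset.sum_congr rfl fun g _ => ?_
    have hsnoc (b : α) : Fin.snocEquiv (fun _ => α) (b, g) =
        (Fin.snoc (α := fun _ => α) g b : Fin (m + 1) → α) := rfl
    simp only [hsnoc, Fin.snoc_injective_iff, Fin.prod_univ_castSucc,
      priorValues_castSucc, priorValues_last, Fin.init_snoc, Fin.snoc_castSucc, Fin.snoc_last]
    by_cases hg : Function.Injective g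
    · have hrange : (Finset.univ.filter (· ∉ Set.range g)) = (Finset.univ.image g)ᶜ := by
        ext; simp
      have hcard : (Finset.univ.image g).card < m + 1 := by
        simp [Finset.card_image_of_injective _ hg]
      simp only [hg, true_and, if_true]
      rw [← Finset.sum_filter, ← Finset.mul_sum, hrange, hw _ hcard, mul_one]
    · simp [hg]

lemma sum_perm_prod_priorValues {n : ℕ} (w : Finset (Fin n) → Fin n → R)
    (hw : ∀ S ≠ Finset.univ, ∑ b ∈ Sᶜ, w S b = 1) :
    ∑ π : Equiv.Perm (Fin n), ∏ k, w (priorValues π k) (π k) = 1 := by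
  rw [← sum_injective_prod_priorValues w fun S hS => hw S ?_]
  · refine Finset.sum_nbij (fun π => ⇑π) (fun π _ => by simp [π.injective])
      (fun _ _ _ _ h => DFunLike.coe_injective h) (fun f hf => ?_) fun _ _ => rfl
    have hf : Function.Injective f := by simpa using hf
    exact ⟨Equiv.ofBijective f (Finite.injective_iff_bijective.1 hf), by simp, rfl⟩
  · rintro rfl
    simp at hS

end SequentialDraws

section Permutation

variable {n : ℕ}

lemma apply_notMem_priorValues (π : Equiv.Perm (Fin n)) (k : Fin n) : π k ∉ priorValues π k := by
  simp [apply_mem_priorValues_iff π.injective]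

lemma priorValues_ne_univ (π : Equiv.Perm (Fin n)) (k : Fin n) :
    priorValues π k ≠ Finset.univ :=
  fun h => apply_notMem_priorValues π k (h ▸ Finset.mem_univ _)

lemma card_compl_priorValues (π : Equiv.Perm (Fin n)) (k : Fin n) :
    (priorValues π k)ᶜ.card = n - k := by
  simp [priorValues, Finset.card_compl, Finset.card_image_of_injective _ π.injective]

lemma compl_priorValues_of_add_one_eq (π : Equiv.Perm (Fin n)) {k : Fin n}
    (hk : (k : ℕ) + 1 = n) : (priorValues π k)ᶜ = {π k} := by
  refine (Finset.eq_of_subset_of_card_le ?_ ?_).symm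
  · simpa using apply_notMem_priorValues π k
  · rw [card_compl_priorValues, Finset.card_singleton]
    omega

lemma invCount_eq_sum_gapsBelow (π : Equiv.Perm (Fin n)) :
    invCount π = ∑ k, gapsBelow (priorValues π k) (π k) := by
  unfold invCount
  rw [Finset.card_filter, Fintype.sum_prod_type]
  refine Finset.sum_congr rfl fun k _ => ?_
  rw [← Finset.card_filter]
  refine Finset.card_bijective π π.bijective fun j => ?_
  simp only [Finset.mem_filter, Finset.mem_univ, true_and, Finset.mem_compl,
    apply_mem_priorValues_iff π.injective, not_lt]
  exact and_congr_left fun h => ⟨le_of_lt, fun hkj => hkj.lt_of_ne fun e => h.ne (e ▸ rfl)⟩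

lemma gapsBelow_add_card_filter_lt (S : Finset (Fin n)) (b : Fin n) :
    gapsBelow S b + (S.filter (· < b)).card = b := by
  have hS : S.filter (· < b) = (Finset.Iio b).filter (· ∈ S) := by
    ext; simp [and_comm]
  have hSc : Sᶜ.filter (· < b) = (Finset.Iio b).filter (· ∉ S) := by
    ext; simp [and_comm]
  rw [gapsBelow, hS, hSc, add_comm, Finset.card_filter_add_card_filter_not, Fin.card_Iio]

lemma kappa_eq_setKappa (q : K) (x : Fin n → K) {l : List (Fin n)} (hl : l.Nodup) :
    kappa q x l = setKappa q x l.toFinset := by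
  have hperm := l.perm_insertionSort fun a c : Fin n => c ≤ a
  unfold kappa
  rw [← List.toFinset_eq_of_perm _ _ hperm]
  have hsorted : (l.insertionSort fun a c : Fin n => c ≤ a).SortedGT :=
    List.SortedGE.sortedGT_of_nodup l.sortedGE_insertionSort (hperm.nodup_iff.2 hl)
  generalize (l.insertionSort fun a c : Fin n => c ≤ a) = s at hsorted
  unfold setKappa
  rw [List.sum_toFinset _ hsorted.nodup, ← Fin.sum_univ_fun_getElem]
  refine Finset.sum_congr rfl fun i _ => ?_
  have hgaps := gapsBelow_add_card_filter_lt s.toFinset (s.get i)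
  rw [card_filter_lt_get hsorted] at hgaps
  rw [← zpow_natCast, ← List.get_eq_getElem]
  congr 2
  omega

lemma kappa_map_filter_finRange (q : K) (x : Fin n → K) (π : Equiv.Perm (Fin n))
    (P : Fin n → Prop) [DecidablePred P] :
    kappa q x (((List.finRange n).filter fun i => decide (P i)).map π) =
      setKappa q x ((Finset.univ.filter P).image π) := by
  rw [kappa_eq_setKappa q x (((List.nodup_finRange n).filter _).map π.injective)]
  have htoFinset : (((List.finRange n).filter fun i => decide (P i)).map π).toFinset =
      (Finset.univ.filter P).image π := by
    ext; simp
  rw [htoFinset]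

lemma kappa_finRange (q : K) (x : Fin n → K) : kappa q x (List.finRange n) = ∑ i, x i := by
  simp [kappa_eq_setKappa q x (List.nodup_finRange n), setKappa, gapsBelow]

lemma kappa_singleton_of_isLRM {q : K} (hq : q ≠ 0) (x : Fin n → K) {π : Equiv.Perm (Fin n)}
    {k : Fin n} (hk : isLRM π k) : kappa q x [π k] = kappaIncr q x (priorValues π k) (π k) := by
  have hempty : kappa q x [π k] = kappaIncr q x ∅ (π k) := by
    simp [kappa_eq_setKappa, kappaIncr, setKappa]
  rw [hempty]
  refine kappaIncr_congr hq x (Finset.notMem_empty _) (apply_notMem_priorValues π k) fun c hc => ?_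
  obtain ⟨i, rfl⟩ := π.surjective c
  simpa [apply_mem_priorValues_iff π.injective] using fun hik => (hk i hik).not_gt hc

lemma pMin_le {π : Equiv.Perm (Fin n)} {i k : Fin n} (hik : i < k) (hπ : π i < π k) :
    pMin π k ≤ i :=
  Nat.sInf_le ⟨i.isLt, hik, hπ⟩

lemma kappa_segTo_sub_of_not_isLRM {q : K} (hq : q ≠ 0) (x : Fin n → K)
    {π : Equiv.Perm (Fin n)} {k : Fin n} (hk : ¬ isLRM π k) :
    kappa q x (segTo π k) - q⁻¹ * kappa q x (segBefore π k) =
      kappaIncr q x (priorValues π k) (π k) := by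
  obtain ⟨j, hjk, hj⟩ : ∃ j < k, π j < π k := by
    simp only [isLRM, not_forall, not_lt] at hk
    obtain ⟨j, hjk, hj⟩ := hk
    exact ⟨j, hjk, hj.lt_of_ne (π.injective.ne hjk.ne)⟩
  have hpk : pMin π k ≤ (k : ℕ) := (pMin_le hjk hj).trans hjk.le
  have hsegTo : Finset.univ.filter (fun i : Fin n => pMin π k ≤ (i : ℕ) ∧ (i : ℕ) ≤ k) =
      insert k (Finset.univ.filter fun i : Fin n => pMin π k ≤ (i : ℕ) ∧ (i : ℕ) < k) := by
    ext i
    simp only [Finset.mem_filter, Finset.mem_univ, true_and, Finset.mem_insert, Fin.ext_iff]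
    omega
  unfold segTo segBefore
  rw [kappa_map_filter_finRange, kappa_map_filter_finRange, hsegTo, Finset.image_insert]
  refine kappaIncr_congr hq x (by simp) (apply_notMem_priorValues π k) fun c hc => ?_
  obtain ⟨i, rfl⟩ := π.surjective c
  simpa [apply_mem_priorValues_iff π.injective] using fun hik : i < k => pMin_le hik hc

lemma kappa_finRange_sub_eq_kappaDeficit (q : K) (x : Fin n → K) (π : Equiv.Perm (Fin n))
    (k : Fin n) :
    kappa q x (List.finRange n) - q ^ (((k : ℕ) : ℤ) - (n : ℤ)) * kappa q x (prefixVals π k) =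
      kappaDeficit q x (priorValues π k) := by
  have hpow : q ^ (((k : ℕ) : ℤ) - (n : ℤ)) = q⁻¹ ^ (n - (k : ℕ)) := by
    rw [inv_pow, ← zpow_natCast, ← zpow_neg, Nat.cast_sub k.isLt.le, neg_sub]
  have hprior : kappa q x (prefixVals π k) = setKappa q x (priorValues π k) := by
    unfold prefixVals priorValues
    rw [kappa_map_filter_finRange]
    congr 2
    ext
    simp
  rw [kappa_finRange, hpow, hprior, kappaDeficit, card_compl_priorValues]

lemma psiFormula_eq_prod_nextProb {q : K} (hq : q ≠ 0) {x : Fin n → K}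
    (hD : ∀ S ≠ Finset.univ, kappaDeficit q x S ≠ 0) (π : Equiv.Perm (Fin n)) :
    psiFormula n q x π = ∏ k, nextProb q x (priorValues π k) (π k) := by
  have hratio : ∏ k ∈ Finset.univ.filter fun k : Fin n => (k : ℕ) + 1 < n,
        kappaIncr q x (priorValues π k) (π k) / kappaDeficit q x (priorValues π k) =
      ∏ k, kappaIncr q x (priorValues π k) (π k) / kappaDeficit q x (priorValues π k) := by
    refine Finset.prod_subset (Finset.filter_subset _ _) fun k _ hk => ?_
    have hlast : (k : ℕ) + 1 = n := by
      simp only [Finset.mem_filter, Finset.mem_univ, true_and] at hk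
      omega
    rw [kappaIncr_eq_kappaDeficit hq x (compl_priorValues_of_add_one_eq π hlast),
      div_self (hD _ (priorValues_ne_univ π k))]
  unfold psiFormula nextProb
  rw [Finset.prod_congr rfl fun k hk => kappa_singleton_of_isLRM hq x (Finset.mem_filter.1 hk).2.2,
    Finset.prod_congr rfl fun k hk =>
      kappa_segTo_sub_of_not_isLRM hq x (Finset.mem_filter.1 hk).2.2,
    Finset.prod_congr rfl fun k _ => kappa_finRange_sub_eq_kappaDeficit q x π k]
  simp only [← Finset.filter_filter]
  rw [Finset.prod_filter_mul_prod_filter_not, mul_div_assoc, ← Finset.prod_div_distrib, hratio,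
    Finset.prod_congr rfl fun k _ => mul_div_assoc _ _ _, Finset.prod_mul_distrib,
    Finset.prod_pow_eq_pow_sum, ← invCount_eq_sum_gapsBelow, zpow_neg,
    zpow_natCast, inv_pow]

lemma sum_psiFormula {q : K} (hq : q ≠ 0) {x : Fin n → K}
    (hD : ∀ S ≠ Finset.univ, kappaDeficit q x S ≠ 0) :
    ∑ π : Equiv.Perm (Fin n), psiFormula n q x π = 1 := by
  simp only [psiFormula_eq_prod_nextProb hq hD]
  exact sum_perm_prod_priorValues _ fun S hS => sum_compl_nextProb hq x (hD S hS)

end Permutation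

theorem qTsetlin_perm_formula_positive_and_normalized_general [LinearOrder K]
    [IsStrictOrderedRing K] (n : ℕ) (q : K) (hq : 1 ≤ q) (x : Fin n → K) (hx : ∀ i, 0 < x i) :
    (∀ π : Equiv.Perm (Fin n), ∀ k : Fin n,
      (isLRM π k → 0 < kappa q x [π k]) ∧
      (¬ isLRM π k →
        0 < kappa q x (segTo π k) - q⁻¹ * kappa q x (segBefore π k)) ∧
      0 < kappa q x (List.finRange n)
            - q ^ (((k : ℕ) : ℤ) - (n : ℤ)) * kappa q x (prefixVals π k)) ∧
    (∑ π : Equiv.Perm (Fin n), psiFormula n q x π = 1) := by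
  have hq0 : q ≠ 0 := (zero_lt_one.trans_le hq).ne'
  refine ⟨fun π k => ⟨fun hk => ?_, fun hk => ?_, ?_⟩,
    sum_psiFormula hq0 fun S hS => (kappaDeficit_pos hq hx hS).ne'⟩
  · rw [kappa_singleton_of_isLRM hq0 x hk]
    exact kappaIncr_pos hq hx (apply_notMem_priorValues π k)
  · rw [kappa_segTo_sub_of_not_isLRM hq0 x hk]
    exact kappaIncr_pos hq hx (apply_notMem_priorValues π k)
  · rw [kappa_finRange_sub_eq_kappaDeficit]
    exact kappaDeficit_pos hq hx (priorValues_ne_univ π k)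

/-- For `n ≥ 1`, real `q ≥ 1` and positive weights summing to one, every
factor occurring in the product formula `psiFormula` is strictly positive (the factors
`κ(π_k; x)` for left-to-right-minimum positions, the factors
`κ(π_{p_k},…,π_k; x) − q⁻¹ κ(π_{p_k},…,π_{k−1}; x)` for the remaining positions, and the
denominator factors `κ(w₀;x) − q^{k−n−1} κ(π_1,…,π_{k−1}; x)`), and the formula's entries
sum to `1` over `S_n`. -/
theorem qTsetlin_perm_formula_positive_and_normalized (n : ℕ) (hn : 1 ≤ n) (q : ℝ)
    (hq : 1 ≤ q) (x : Fin n → ℝ) (hx : ∀ i, 0 < x i) (hx1 : ∑ i, x i = 1) :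
    (∀ π : Equiv.Perm (Fin n), ∀ k : Fin n, (k : ℕ) + 1 < n →
      (isLRM π k → 0 < kappa q x [π k]) ∧
      (¬ isLRM π k →
        0 < kappa q x (segTo π k) - q⁻¹ * kappa q x (segBefore π k)) ∧
      0 < kappa q x (List.finRange n)
            - q ^ (((k : ℕ) : ℤ) - (n : ℤ)) * kappa q x (prefixVals π k)) ∧
    (∑ π : Equiv.Perm (Fin n), psiFormula n q x π = 1) := by
  obtain ⟨hpos, hsum⟩ := qTsetlin_perm_formula_positive_and_normalized_general n q hq x hx
  exact ⟨fun π k _ => hpos π k, hsum⟩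

end QTsetlin
end
end

section
/- Let q be a prime power, m a composition of n with all m_j ≥ 1, x = (x_1,…,x_n) m-compatible weights, and x̄_j = [m_j]_q·x_{n_j}. Let Λ_{G/B}, Λ_{S_n}, Λ_{W_m} denote the sets of eigenvalues (over ℂ) of the transition matrices of T_{G/B}(q,x), T_{S_n}(q,x) and T_{W_m}(q,x̄), respectively. Then Λ_{W_m} ⊆ Λ_{S_n} ⊆ Λ_{G/B}. Moreover, if T_{G/B}(q,x) is diagonalizable, then so are T_{S_n}(q,x) and T_{W_m}(q,x̄). -/
open scoped Classical
set_option synthInstance.maxHeartbeats 1000000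
set_option maxHeartbeats 1000000

noncomputable section

namespace QTsetlin

/-- `M` is upper triangular. -/
def upperTri {F : Type} [Field F] {n : ℕ} (M : Matrix (Fin n) (Fin n) F) : Prop :=
  ∀ i j : Fin n, j < i → M i j = 0

/-- `M` is lower triangular. -/
def lowerTri {F : Type} [Field F] {n : ℕ} (M : Matrix (Fin n) (Fin n) F) : Prop :=
  ∀ i j : Fin n, i < j → M i j = 0

variable (F : Type) [Field F] [Fintype F] [DecidableEq F] (n : ℕ)

/-- The general linear group `G = GL_n(F_q)`. -/
abbrev GLn := GL (Fin n) F

/-- The Borel subgroup `B` of invertible upper triangular matrices. -/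
def Bsub : Subgroup (GLn F n) where
  carrier := {g | upperTri (g : Matrix (Fin n) (Fin n) F)}
  one_mem' := by
    intro i j hij
    simp [Matrix.one_apply, (Fin.ne_of_lt hij).symm]
  mul_mem' := by
    intro a b ha hb i j hij
    exact Matrix.BlockTriangular.mul ha hb hij
  inv_mem' := by
    intro a ha
    have hdet : IsUnit ((a : Matrix (Fin n) (Fin n) F).det) :=
      (Matrix.isUnit_iff_isUnit_det _).mp a.isUnit
    have hinv : Invertible (a : Matrix (Fin n) (Fin n) F) :=
      Matrix.invertibleOfIsUnitDet _ hdet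
    have h2 : ((a : Matrix (Fin n) (Fin n) F)⁻¹).BlockTriangular (id : Fin n → Fin n) :=
      Matrix.blockTriangular_inv_of_blockTriangular ha
    show upperTri ((a⁻¹ : GLn F n) : Matrix (Fin n) (Fin n) F)
    rw [show ((a⁻¹ : GLn F n) : Matrix (Fin n) (Fin n) F)
        = (a : Matrix (Fin n) (Fin n) F)⁻¹ from Matrix.coe_units_inv a]
    exact h2

/-- The set of cosets `G/B`. -/
abbrev Cosets := GLn F n ⧸ Bsub F n

/-- permutation matrix of `π`: entry 1 in positions `(π j, j)`. -/
def permMat (π : Equiv.Perm (Fin n)) : Matrix (Fin n) (Fin n) F :=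
  fun i j => if π j = i then 1 else 0

lemma permMat_mul (π σ : Equiv.Perm (Fin n)) :
    permMat F n π * permMat F n σ = permMat F n (π * σ) := by
  ext i j
  rw [Matrix.mul_apply]
  simp only [permMat, mul_ite, ite_mul, one_mul, mul_one, mul_zero, zero_mul]
  rw [Finset.sum_eq_single (σ j)]
  · by_cases h : π (σ j) = i <;> simp [Equiv.Perm.mul_apply, h]
  · intro k _ hk
    simp [hk.symm]
  · simp

lemma permMat_one : permMat F n 1 = 1 := by
  ext i j
  simp [permMat, Matrix.one_apply, eq_comm]

/-- The permutation matrix of `π`, as an element of `GL_n(F)`. -/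
def permGL (π : Equiv.Perm (Fin n)) : GLn F n :=
  ⟨permMat F n π, permMat F n π⁻¹,
    by rw [permMat_mul, mul_inv_cancel, permMat_one],
    by rw [permMat_mul, inv_mul_cancel, permMat_one]⟩

/-- `f_i(t)`: identity matrix with an extra entry `t` in position `(r, c)`, as an
element of `GL_n(F)`. -/
def transvGL (r c : Fin n) (h : r ≠ c) (t : F) : GLn F n :=
  ⟨Matrix.transvection r c t, Matrix.transvection r c (-t),
    by rw [Matrix.transvection_mul_transvection_same _ _ h, add_neg_cancel,
      Matrix.transvection_zero],
    by rw [Matrix.transvection_mul_transvection_same _ _ h, neg_add_cancel,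
      Matrix.transvection_zero]⟩

variable (K : Type) [Field K]

/-- Matrix (row convention: row `gB` is `(gB) · T_{k+1}`) of the Hecke generator `T_{k+1}`
(paper indexing) on `ℂ[G/B]`:
`(gB)·T_i = g s_i B + ∑_{t ≠ 0} g f_i(t) B`, where `s_i` swaps (0-based) positions `k, k+1`
and `f_i(t)` has an extra entry `t` in (0-based) position `(k+1, k)`. -/
def genGB (k : ℕ) : Matrix (Cosets F n) (Cosets F n) K := fun C D =>
  if h : k + 1 < n then
    (if (QuotientGroup.mk (C.out * permGL F n
          (Equiv.swap ⟨k, Nat.lt_of_succ_lt h⟩ ⟨k + 1, h⟩)) : Cosets F n) = D then 1 else 0)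
    + ((Finset.univ.filter fun t : F => t ≠ 0 ∧
        (QuotientGroup.mk (C.out * transvGL F n ⟨k + 1, h⟩ ⟨k, Nat.lt_of_succ_lt h⟩
          (fun hc => by simp [Fin.ext_iff] at hc) t) : Cosets F n) = D).card : K)
  else 0

/-- Matrix of the product `T_k T_{k-1} ⋯ T_1` (paper indexing) on `ℂ[G/B]`. -/
def prodGenGB : ℕ → Matrix (Cosets F n) (Cosets F n) K
  | 0 => 1
  | k + 1 => genGB F n K k * prodGenGB k

/-- The (0-based) row index of the leading entry (the pivot `1` of the distinguished coset
representative) in the first column of a representative of the coset `C`. -/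
def pivotRow (C : Cosets F n) : ℕ :=
  sInf {i : ℕ | ∃ h : i < n,
    ((C.out : GLn F n) : Matrix (Fin n) (Fin n) F) ⟨i, h⟩
      ⟨0, Nat.lt_of_le_of_lt (Nat.zero_le i) h⟩ ≠ 0}

/-- Matrix of the weighting operator `X_{G/B}(q,x)`, where `q` is the cardinality of the
field: `gB ↦ (x_i / q^{n-i}) gB` with `i` the row index of the leading 1 in the first
column of the distinguished representative of `gB`. -/
def XGB (x : Fin n → K) : Matrix (Cosets F n) (Cosets F n) K := fun C D =>
  if D = C then
    (if h : pivotRow F n C < n then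
      x ⟨pivotRow F n C, h⟩ / (Fintype.card F : K) ^ (n - 1 - pivotRow F n C)
    else 0)
  else 0

/-- Matrix of the q-Tsetlin library operator
`T_{G/B}(q,x) = (∑_{i=1}^n T_{i-1} ⋯ T_1) ∘ X_{G/B}(q,x)` on `ℂ[G/B]` (row convention). -/
def TGB (x : Fin n → K) : Matrix (Cosets F n) (Cosets F n) K :=
  (∑ k ∈ Finset.range n, prodGenGB F n K k) * XGB F n K x

/-- The coset `gB` belongs to the double coset `[π] = B⁻ π B`. -/
def inDC (π : Equiv.Perm (Fin n)) (C : Cosets F n) : Prop :=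
  ∃ l b : GLn F n, lowerTri (l : Matrix (Fin n) (Fin n) F) ∧
    upperTri (b : Matrix (Fin n) (Fin n) F) ∧
    C = QuotientGroup.mk (l * permGL F n π * b)

/-- Number of coinversions `#{(i,j) : i < j, π_i < π_j}` of a permutation. -/
def coinvCount {m : ℕ} (π : Equiv.Perm (Fin m)) : ℕ :=
  (Finset.univ.filter fun p : Fin m × Fin m => p.1 < p.2 ∧ π p.1 < π p.2).card

/-- Matrix (row convention) of the Hecke generator `T_{k+1}` (paper indexing) on `ℂS_n`. -/
def genMatP (m : ℕ) {R : Type} [Field R] (q : R) (k : ℕ) :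
    Matrix (Equiv.Perm (Fin m)) (Equiv.Perm (Fin m)) R := fun π σ =>
  if h : k + 1 < m then
    if π ⟨k + 1, h⟩ < π ⟨k, Nat.lt_of_succ_lt h⟩ then
      (if σ = π * Equiv.swap ⟨k, Nat.lt_of_succ_lt h⟩ ⟨k + 1, h⟩ then q else 0)
    else
      (if σ = π * Equiv.swap ⟨k, Nat.lt_of_succ_lt h⟩ ⟨k + 1, h⟩ then 1 else 0)
        + (if σ = π then q - 1 else 0)
  else 0

/-- Matrix of the product `T_k T_{k-1} ⋯ T_1` on permutations. -/
def prodGenP (m : ℕ) {R : Type} [Field R] (q : R) :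
    ℕ → Matrix (Equiv.Perm (Fin m)) (Equiv.Perm (Fin m)) R
  | 0 => 1
  | k + 1 => genMatP m q k * prodGenP m q k

/-- Matrix of the weighting operator `X_{S_n}(q,x)`. -/
def XSnP (m : ℕ) {R : Type} [Field R] (q : R) (x : Fin m → R) :
    Matrix (Equiv.Perm (Fin m)) (Equiv.Perm (Fin m)) R := fun π σ =>
  if σ = π then
    (if h : 0 < m then x (π ⟨0, h⟩) / q ^ (m - 1 - (π ⟨0, h⟩ : ℕ)) else 0)
  else 0

/-- Matrix of the q-Tsetlin library operator `T_{S_n}(q,x)` (row convention). -/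
def TSnP (m : ℕ) {R : Type} [Field R] (q : R) (x : Fin m → R) :
    Matrix (Equiv.Perm (Fin m)) (Equiv.Perm (Fin m)) R :=
  (∑ k ∈ Finset.range m, prodGenP m q k) * XSnP m q x

/-- The q-integer `[a]_q = 1 + q + ⋯ + q^{a-1}`. -/
def qInt {R : Type} [Field R] (q : R) (a : ℕ) : R := ∑ r ∈ Finset.range a, q ^ r

/-- `n_j = m_1 + ⋯ + m_j` (the first `j` parts of the composition, `j : ℕ`). -/
def nsum (l : ℕ) (m : Fin l → ℕ) (j : ℕ) : ℕ :=
  ∑ t ∈ Finset.univ.filter fun t : Fin l => (t : ℕ) < j, m t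

/-- The (0-based) index `j` of the block `M_{j+1} = {n_j + 1, …, n_{j+1}}` containing the
0-based value `v` (paper value `v+1`). -/
def blockOf (l : ℕ) (m : Fin l → ℕ) (v : ℕ) : ℕ :=
  sInf {j : ℕ | v < nsum l m (j + 1)}

/-- Words of length `nn` in the alphabet `{1,…,l}` with `m j` occurrences of letter `j`. -/
abbrev Words (nn l : ℕ) (m : Fin l → ℕ) : Type :=
  {w : Fin nn → Fin l // ∀ j, (Finset.univ.filter fun i => w i = j).card = m j}

/-- Matrix (row convention) of the Hecke generator `T_{k+1}` (paper indexing) on words. -/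
def genMatW (nn l : ℕ) (m : Fin l → ℕ) {R : Type} [Field R] (q : R) (k : ℕ) :
    Matrix (Words nn l m) (Words nn l m) R := fun w u =>
  if h : k + 1 < nn then
    if w.1 ⟨k + 1, h⟩ ≤ w.1 ⟨k, Nat.lt_of_succ_lt h⟩ then
      (if u.1 = w.1 ∘ Equiv.swap ⟨k, Nat.lt_of_succ_lt h⟩ ⟨k + 1, h⟩ then q else 0)
    else
      (if u.1 = w.1 ∘ Equiv.swap ⟨k, Nat.lt_of_succ_lt h⟩ ⟨k + 1, h⟩ then 1 else 0)
        + (if u = w then q - 1 else 0)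
  else 0

/-- Matrix of the product `T_k T_{k-1} ⋯ T_1` on words. -/
def prodGenW (nn l : ℕ) (m : Fin l → ℕ) {R : Type} [Field R] (q : R) :
    ℕ → Matrix (Words nn l m) (Words nn l m) R
  | 0 => 1
  | k + 1 => genMatW nn l m q k * prodGenW nn l m q k

/-- Matrix of the weighting operator `X_{W_m}(q,x̄)`. -/
def XW (nn l : ℕ) (m : Fin l → ℕ) {R : Type} [Field R] (q : R) (xb : Fin l → R) :
    Matrix (Words nn l m) (Words nn l m) R := fun w u =>
  if u = w then
    (if h : 0 < nn then
      xb (w.1 ⟨0, h⟩) /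
        (q ^ (∑ t ∈ Finset.univ.filter fun t : Fin l => w.1 ⟨0, h⟩ < t, m t)
          * qInt q (m (w.1 ⟨0, h⟩)))
    else 0)
  else 0

/-- Matrix of the q-Tsetlin library operator `T_{W_m}(q,x̄)` (row convention). -/
def TWm (nn l : ℕ) (m : Fin l → ℕ) {R : Type} [Field R] (q : R) (xb : Fin l → R) :
    Matrix (Words nn l m) (Words nn l m) R :=
  (∑ k ∈ Finset.range nn, prodGenW nn l m q k) * XW nn l m q xb

/-- The weights `x` are `m`-compatible: `y_i = x_i / q^{n-i}` is constant on blocks. -/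
def mCompatible (nn l : ℕ) (m : Fin l → ℕ) {R : Type} [Field R] (q : R) (x : Fin nn → R) :
    Prop :=
  ∀ i i' : Fin nn, blockOf l m (i : ℕ) = blockOf l m (i' : ℕ) →
    x i / q ^ (nn - 1 - (i : ℕ)) = x i' / q ^ (nn - 1 - (i' : ℕ))

/-- The set of eigenvalues (over `ℂ`) of a square matrix. -/
def eigSet {P : Type} [Fintype P] [DecidableEq P] (M : Matrix P P ℂ) : Set ℂ :=
  {μ : ℂ | ∃ v : P → ℂ, v ≠ 0 ∧ M.mulVec v = μ • v}

/-- `M` is diagonalizable: conjugate to a diagonal matrix. -/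
def IsDiagonalizable {P : Type} [Fintype P] [DecidableEq P] (M : Matrix P P ℂ) : Prop :=
  ∃ Pm D : Matrix P P ℂ, IsUnit Pm.det ∧ D.IsDiag ∧ M = Pm * D * Pm⁻¹

/-!
Forgetting all but the cell of the Bruhat decomposition `G = ⨆ B⁻ π B` maps `G/B` onto `S_n`, and
forgetting all but the blocks of the values maps `S_n` onto `W_m`.  Both maps are lumpings of the
transition matrices: composition with the map embeds the functions on the quotient into the
functions on the source, and intertwines the two matrices.  So the smaller matrix is the restriction
of the larger one to an invariant subspace, and its eigenvalues and its diagonalizability are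
inherited.  For `G/B` the point is that `T_i` sums over the `q` cosets `g x_i(u) s_i B`; on the cell
of `π` all of them lie in the cell of `π s_i` if `π_{i+1} < π_i`, and otherwise exactly one does
while the others stay in the cell of `π`.
-/

section Lumping

/-- `A'` is the lumping of `A` along `φ`: the functions that are constant on the fibres of `φ` are
preserved by `A`, which acts on them as `A'`.  This is the intertwining relation between the
transition matrices of a Markov chain and of its projection. -/
def IsLumping {R P Q : Type*} [NonUnitalNonAssocSemiring R] [Fintype P] [Fintype Q] (φ : P → Q)
    (A : Matrix P P R) (A' : Matrix Q Q R) : Prop :=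
  ∀ v : Q → R, A.mulVec (v ∘ φ) = A'.mulVec v ∘ φ

namespace IsLumping

variable {R P Q : Type*} [Fintype P] [Fintype Q] {φ : P → Q}

lemma zero [NonUnitalNonAssocSemiring R] : IsLumping φ (0 : Matrix P P R) 0 := fun v => by
  simp only [Matrix.zero_mulVec]
  rfl

lemma add [NonUnitalNonAssocSemiring R] {A B : Matrix P P R} {A' B' : Matrix Q Q R}
    (hA : IsLumping φ A A') (hB : IsLumping φ B B') : IsLumping φ (A + B) (A' + B') := fun v => by
  rw [Matrix.add_mulVec, Matrix.add_mulVec, hA, hB]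
  rfl

lemma sum [NonUnitalNonAssocSemiring R] {ι : Type*} (s : Finset ι) {A : ι → Matrix P P R}
    {A' : ι → Matrix Q Q R} (h : ∀ i, IsLumping φ (A i) (A' i)) :
    IsLumping φ (∑ i ∈ s, A i) (∑ i ∈ s, A' i) := by
  induction s using Finset.cons_induction with
  | empty => exact zero
  | cons i s hi ih => simpa only [Finset.sum_cons] using (h i).add ih

lemma one [NonAssocSemiring R] [DecidableEq P] [DecidableEq Q] :
    IsLumping φ (1 : Matrix P P R) 1 := fun v => by
  rw [Matrix.one_mulVec, Matrix.one_mulVec]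

lemma diagonal [NonUnitalNonAssocSemiring R] [DecidableEq P] [DecidableEq Q] {d : P → R}
    {d' : Q → R} (h : ∀ p, d p = d' (φ p)) :
    IsLumping φ (Matrix.diagonal d) (Matrix.diagonal d') := fun v => by
  ext p
  simp only [Matrix.mulVec_diagonal, Function.comp_apply, h]

lemma mul [NonUnitalSemiring R] {A B : Matrix P P R} {A' B' : Matrix Q Q R}
    (hA : IsLumping φ A A') (hB : IsLumping φ B B') : IsLumping φ (A * B) (A' * B') := fun v => by
  rw [← Matrix.mulVec_mulVec, ← Matrix.mulVec_mulVec, hB, hA]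

end IsLumping

lemma iSup_eigenspace_eq_top_of_injective {k V W : Type*} [Field k] [AddCommGroup V] [Module k V]
    [FiniteDimensional k V] [AddCommGroup W] [Module k W] {f : Module.End k V}
    {g : Module.End k W} (ι : W →ₗ[k] V) (hι : Function.Injective ι) (hfg : f ∘ₗ ι = ι ∘ₗ g)
    (hf : ⨆ μ, f.eigenspace μ = ⊤) : ⨆ μ, g.eigenspace μ = ⊤ := by
  have hinter : ∀ w, f (ι w) = ι (g w) := LinearMap.congr_fun hfg
  have hcomap : ∀ μ, (f.eigenspace μ).comap ι = g.eigenspace μ := fun μ => by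
    ext w
    simp only [Submodule.mem_comap, Module.End.mem_eigenspace_iff, hinter, ← map_smul, hι.eq_iff]
  have hrange : ∀ v ∈ LinearMap.range ι, f v ∈ LinearMap.range ι := by
    rintro _ ⟨w, rfl⟩
    exact ⟨g w, (hinter w).symm⟩
  apply Submodule.map_injective_of_injective hι
  calc (⨆ μ, g.eigenspace μ).map ι
      = ⨆ μ, LinearMap.range ι ⊓ f.eigenspace μ := by
        simp only [Submodule.map_iSup, ← hcomap, Submodule.map_comap_eq]
    _ = LinearMap.range ι := (Submodule.eq_iSup_inf_genEigenspace 1 hrange hf).symm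
    _ = (⊤ : Submodule k W).map ι := (Submodule.map_top ι).symm

variable {P Q : Type} [Fintype P] [DecidableEq P] [Fintype Q] [DecidableEq Q]

lemma IsDiagonalizable.iSup_eigenspace_eq_top {M : Matrix P P ℂ} (hM : IsDiagonalizable M) :
    ⨆ μ, Module.End.eigenspace (Matrix.toLin' M) μ = ⊤ := by
  obtain ⟨R, D, hR, hD, rfl⟩ := hM
  have hcol : ∀ j, R.col j ∈
      Module.End.eigenspace (Matrix.toLin' (R * D * R⁻¹)) (D j j) := fun j => by
    rw [Module.End.mem_eigenspace_iff, Matrix.toLin'_apply, ← Matrix.mulVec_single_one,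
      Matrix.mulVec_mulVec, Matrix.mul_assoc, Matrix.nonsing_inv_mul _ hR, Matrix.mul_one,
      ← hD.diagonal_diag]
    ext i
    simp [mul_comm]
  refine Submodule.eq_top_iff'.mpr fun v => ?_
  have hv : v = ∑ j, R⁻¹.mulVec v j • R.col j := by
    conv_lhs => rw [← Matrix.one_mulVec v, ← Matrix.mul_nonsing_inv _ hR, ← Matrix.mulVec_mulVec]
    ext i
    simp [Matrix.mulVec, dotProduct, mul_comm]
  rw [hv]
  exact Submodule.sum_mem _ fun j _ => Submodule.smul_mem _ _ (Submodule.mem_iSup_of_mem _ (hcol j))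

lemma isDiagonalizable_of_iSup_eigenspace_eq_top {M : Matrix P P ℂ}
    (hM : ⨆ μ, Module.End.eigenspace (Matrix.toLin' M) μ = ⊤) : IsDiagonalizable M := by
  rw [Submodule.iSup_eq_span] at hM
  let e := (Module.Basis.ofSpan hM.ge).indexEquiv (Pi.basisFun ℂ P)
  let b : Module.Basis P ℂ (P → ℂ) := (Module.Basis.ofSpan hM.ge).reindex e
  have hb : ∀ j, ∃ μ, M.mulVec (b j) = μ • b j := fun j => by
    have hj := Module.Basis.ofSpan_subset hM.ge ⟨e.symm j, rfl⟩
    rw [← Module.Basis.reindex_apply] at hj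
    obtain ⟨μ, hμ⟩ := Set.mem_iUnion.mp hj
    exact ⟨μ, Module.End.mem_eigenspace_iff.mp hμ⟩
  choose μ hμ using hb
  let R : Matrix P P ℂ := (Pi.basisFun ℂ P).toMatrix b
  have hR : IsUnit R.det := by
    rw [← Matrix.isUnit_iff_isUnit_det]
    have := (Pi.basisFun ℂ P).invertibleToMatrix b
    exact isUnit_of_invertible R
  have hMR : M * R = R * Matrix.diagonal μ := by
    ext i j
    rw [Matrix.mul_diagonal, mul_comm]
    exact congrFun (hμ j) i
  refine ⟨R, Matrix.diagonal μ, hR, Matrix.isDiag_diagonal μ, ?_⟩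
  rw [← hMR, Matrix.mul_assoc, Matrix.mul_nonsing_inv _ hR, Matrix.mul_one]

namespace IsLumping

variable {φ : P → Q} {A : Matrix P P ℂ} {A' : Matrix Q Q ℂ}

lemma eigSet_subset (h : IsLumping φ A A') (hφ : Function.Surjective φ) : eigSet A' ⊆ eigSet A := by
  rintro μ ⟨v, hv, hAv⟩
  refine ⟨v ∘ φ, fun h0 => hv (hφ.injective_comp_right h0), ?_⟩
  rw [h, hAv]
  rfl

lemma isDiagonalizable (h : IsLumping φ A A') (hφ : Function.Surjective φ)
    (hA : IsDiagonalizable A) : IsDiagonalizable A' := by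
  have hcomm : Matrix.toLin' A ∘ₗ LinearMap.funLeft ℂ ℂ φ =
      LinearMap.funLeft ℂ ℂ φ ∘ₗ Matrix.toLin' A' := LinearMap.ext h
  exact isDiagonalizable_of_iSup_eigenspace_eq_top <|
    iSup_eigenspace_eq_top_of_injective _ (LinearMap.funLeft_injective_of_surjective ℂ ℂ φ hφ)
      hcomm hA.iSup_eigenspace_eq_top

end IsLumping

end Lumping

section Permutations

variable {n} {R : Type} [Field R] (q : R) (k : ℕ)

lemma covBy_mk_succ (h : k + 1 < n) : (⟨k, Nat.lt_of_succ_lt h⟩ : Fin n) ⋖ ⟨k + 1, h⟩ :=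
  Fin.covBy_iff.mpr (Order.covBy_add_one k)

lemma eq_mk_succ_of_covBy {a b : Fin n} (h : a ⋖ b) :
    ∃ hk : (a : ℕ) + 1 < n, b = ⟨a + 1, hk⟩ := by
  have hab : (a : ℕ) + 1 = b := Order.covBy_iff_add_one_eq.mp (Fin.covBy_iff.mp h)
  exact ⟨hab ▸ b.isLt, Fin.ext hab.symm⟩

lemma genMatP_mulVec {a b : Fin n} (h : a ⋖ b) (v : Equiv.Perm (Fin n) → R)
    (π : Equiv.Perm (Fin n)) :
    (genMatP n q a).mulVec v π =
      if π b < π a then q * v (π * Equiv.swap a b)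
      else v (π * Equiv.swap a b) + (q - 1) * v π := by
  obtain ⟨hk, rfl⟩ := eq_mk_succ_of_covBy h
  simp only [Matrix.mulVec, dotProduct, genMatP, dif_pos hk]
  split_ifs
  · simp
  · simp [add_mul, Finset.sum_add_distrib]

lemma genMatP_eq_zero (h : ¬ k + 1 < n) : genMatP n q k = 0 := by
  ext π σ
  simp only [genMatP, dif_neg h, Matrix.zero_apply]

lemma XSnP_eq_diagonal (x : Fin n → R) :
    XSnP n q x = Matrix.diagonal fun π =>
      if h : 0 < n then x (π ⟨0, h⟩) / q ^ (n - 1 - (π ⟨0, h⟩ : ℕ)) else 0 := by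
  ext π σ
  simp only [XSnP, Matrix.diagonal_apply, eq_comm]

end Permutations

section Words

variable {n} {l : ℕ} {m : Fin l → ℕ}

lemma nsum_succ (j : Fin l) : nsum l m ((j : ℕ) + 1) = nsum l m j + m j := by
  have hinsert : (Finset.univ.filter fun t : Fin l => (t : ℕ) < (j : ℕ) + 1)
      = insert j (Finset.univ.filter fun t : Fin l => (t : ℕ) < (j : ℕ)) := by
    ext t
    simp only [Finset.mem_filter, Finset.mem_univ, true_and, Finset.mem_insert, Fin.ext_iff]
    omega
  rw [nsum, nsum, hinsert, Finset.sum_insert (by simp), add_comm]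

lemma nsum_mono : Monotone (nsum l m) := fun a b hab => by
  refine Finset.sum_le_sum_of_subset fun t => ?_
  simp only [Finset.mem_filter, Finset.mem_univ, true_and]
  omega

lemma nsum_eq_sum : nsum l m l = ∑ j, m j := by
  rw [nsum, Finset.filter_true_of_mem fun t _ => t.isLt]

lemma nsum_succ_add_sum_gt (j : Fin l) :
    nsum l m (j + 1) + ∑ t ∈ Finset.univ.filter (fun t : Fin l => j < t), m t = ∑ t, m t := by
  rw [nsum, ← Finset.sum_filter_add_sum_filter_not Finset.univ
    (fun t : Fin l => (t : ℕ) < (j : ℕ) + 1)]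
  simp only [not_lt, Nat.succ_le_iff, Fin.lt_def]

lemma blockOf_eq_iff {v j : ℕ} (hv : v < ∑ t, m t) :
    blockOf l m v = j ↔ nsum l m j ≤ v ∧ v < nsum l m (j + 1) := by
  have hne : {i : ℕ | v < nsum l m (i + 1)}.Nonempty :=
    ⟨l, (hv.trans_eq nsum_eq_sum.symm).trans_le (nsum_mono l.le_succ)⟩
  have hlt : v < nsum l m (blockOf l m v + 1) := Nat.sInf_mem hne
  constructor
  · rintro rfl
    refine ⟨?_, hlt⟩
    rcases hb : blockOf l m v with _ | i
    · simp [nsum]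
    · by_contra! hc
      have : blockOf l m v ≤ i := Nat.sInf_le hc
      omega
  · rintro ⟨hle, hlt'⟩
    refine le_antisymm (Nat.sInf_le hlt') ?_
    by_contra! hc
    exact absurd (hle.trans_lt hlt) (nsum_mono (Nat.succ_le_of_lt hc)).not_gt

lemma blockOf_lt {v : ℕ} (hv : v < ∑ t, m t) : blockOf l m v < l := by
  by_contra! hc
  have hle := ((blockOf_eq_iff hv).mp rfl).1
  exact absurd (hv.trans_eq nsum_eq_sum.symm) ((nsum_mono hc).trans hle).not_gt

/-- The letter `j` for which the block `M_j` contains the value `v`, that is, `blockOf` with its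
codomain cut down to the alphabet. -/
def blockLetter (hmn : ∑ j, m j = n) (v : Fin n) : Fin l :=
  ⟨blockOf l m v, blockOf_lt (v.isLt.trans_eq hmn.symm)⟩

variable (hmn : ∑ j, m j = n)

lemma blockLetter_eq_iff {v : Fin n} {j : Fin l} :
    blockLetter hmn v = j ↔ nsum l m j ≤ v ∧ (v : ℕ) < nsum l m (j + 1) := by
  rw [Fin.ext_iff, ← blockOf_eq_iff (v.isLt.trans_eq hmn.symm), blockLetter]

lemma blockLetter_mono : Monotone (blockLetter hmn) := fun a b hab => by
  have ha := ((blockLetter_eq_iff hmn).mp (rfl : blockLetter hmn a = _)).1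
  have hb := ((blockLetter_eq_iff hmn).mp (rfl : blockLetter hmn b = _)).2
  by_contra! hc
  have hle : nsum l m (blockLetter hmn b + 1) ≤ nsum l m (blockLetter hmn a) := nsum_mono hc
  exact absurd (Fin.le_def.mp hab) (by omega)

lemma card_blockLetter_eq (j : Fin l) :
    (Finset.univ.filter fun v => blockLetter hmn v = j).card = m j := by
  have hmap : (Finset.univ.filter fun v => blockLetter hmn v = j).map Fin.valEmbedding
      = Finset.Ico (nsum l m j) (nsum l m (j + 1)) := by
    ext v
    simp only [blockLetter_eq_iff, Finset.mem_map, Finset.mem_filter, Finset.mem_univ, true_and,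
      Finset.mem_Ico, Fin.valEmbedding_apply]
    refine ⟨fun ⟨_, ha, hav⟩ => hav ▸ ha, fun hv => ?_⟩
    have hn : nsum l m (j + 1) ≤ n := by
      rw [← hmn, ← nsum_eq_sum]
      exact nsum_mono j.isLt
    exact ⟨⟨v, hv.2.trans_le hn⟩, hv, rfl⟩
  rw [← Finset.card_map Fin.valEmbedding, hmap, Nat.card_Ico, nsum_succ, Nat.add_sub_cancel_left]

/-- The right action of the symmetric group on words by permuting positions. -/
def permuteWord (w : Words n l m) (σ : Equiv.Perm (Fin n)) : Words n l m :=
  ⟨w.1 ∘ σ, fun j => by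
    rw [← w.2 j]
    exact Finset.card_equiv σ fun i => by
      simp only [Finset.mem_filter, Finset.mem_univ, true_and, Function.comp_apply]⟩

/-- The word of a permutation: the value `v` is replaced by the letter `j` with `v ∈ M_j`. -/
def permWord (π : Equiv.Perm (Fin n)) : Words n l m :=
  permuteWord ⟨blockLetter hmn, card_blockLetter_eq hmn⟩ π

lemma permWord_mul (π σ : Equiv.Perm (Fin n)) :
    permWord hmn (π * σ) = permuteWord (permWord hmn π) σ := rfl

lemma permWord_surjective : Function.Surjective (permWord hmn) := fun w => by
  have hcard : ∀ j, Nonempty ({i // w.1 i = j} ≃ {v // blockLetter hmn v = j}) := fun j => by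
    rw [← Fintype.card_eq, Fintype.card_subtype, Fintype.card_subtype, w.2 j,
      card_blockLetter_eq hmn j]
  refine ⟨Equiv.ofFiberEquiv fun j => (hcard j).some, Subtype.ext <| funext fun i => ?_⟩
  exact Equiv.ofFiberEquiv_map (g := blockLetter hmn) (fun j => (hcard j).some) i

lemma permuteWord_swap_of_eq {w : Words n l m} {a b : Fin n} (h : w.1 a = w.1 b) :
    permuteWord w (Equiv.swap a b) = w := by
  refine Subtype.ext <| funext fun i => ?_
  change w.1 (Equiv.swap a b i) = w.1 i
  rw [Equiv.swap_apply_def]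
  split_ifs with hia hib
  · rw [hia, h]
  · rw [hib, h]
  · rfl

variable {R : Type} [Field R] (q : R) (k : ℕ)

lemma genMatW_mulVec {a b : Fin n} (h : a ⋖ b) (v : Words n l m → R) (w : Words n l m) :
    (genMatW n l m q a).mulVec v w =
      if w.1 b ≤ w.1 a then q * v (permuteWord w (Equiv.swap a b))
      else v (permuteWord w (Equiv.swap a b)) + (q - 1) * v w := by
  obtain ⟨hk, rfl⟩ := eq_mk_succ_of_covBy h
  have hcoe : ∀ (σ : Equiv.Perm (Fin n)) (u : Words n l m),
      u.1 = w.1 ∘ σ ↔ u = permuteWord w σ := fun σ u => by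
    rw [Subtype.ext_iff]
    rfl
  simp only [Matrix.mulVec, dotProduct, genMatW, dif_pos hk, hcoe]
  split_ifs
  · simp
  · simp [add_mul, Finset.sum_add_distrib]

lemma genMatW_eq_zero (h : ¬ k + 1 < n) : genMatW n l m q k = 0 := by
  ext w u
  simp only [genMatW, dif_neg h, Matrix.zero_apply]

lemma isLumping_genMatP_genMatW :
    IsLumping (permWord hmn) (genMatP n q k) (genMatW n l m q k) := by
  by_cases h : k + 1 < n
  swap
  · rw [genMatP_eq_zero q k h, genMatW_eq_zero q k h]
    exact IsLumping.zero
  have hab := covBy_mk_succ k h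
  set a : Fin n := ⟨k, Nat.lt_of_succ_lt h⟩
  set b : Fin n := ⟨k + 1, h⟩
  refine fun v => funext fun π => ?_
  rw [Function.comp_apply, genMatP_mulVec q hab, genMatW_mulVec q hab]
  simp only [Function.comp_apply, permWord_mul]
  have hword : ∀ {i j}, π i ≤ π j → (permWord hmn π).1 i ≤ (permWord hmn π).1 j :=
    fun hij => blockLetter_mono hmn hij
  rcases lt_or_ge (π b) (π a) with hlt | hge
  · rw [if_pos hlt, if_pos (hword hlt.le)]
  rw [if_neg hge.not_gt]
  rcases (hword hge).lt_or_eq with hlt | heq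
  · rw [if_neg hlt.not_ge]
  · rw [if_pos heq.ge, permuteWord_swap_of_eq heq]
    ring

lemma isLumping_prodGenP_prodGenW :
    IsLumping (permWord hmn) (prodGenP n q k) (prodGenW n l m q k) := by
  induction k with
  | zero => exact IsLumping.one
  | succ k ih => exact (isLumping_genMatP_genMatW hmn q k).mul ih

lemma XW_eq_diagonal (xb : Fin l → R) :
    XW n l m q xb = Matrix.diagonal fun w =>
      if h : 0 < n then
        xb (w.1 ⟨0, h⟩) / (q ^ (∑ t ∈ Finset.univ.filter fun t : Fin l => w.1 ⟨0, h⟩ < t, m t)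
          * qInt q (m (w.1 ⟨0, h⟩)))
      else 0 := by
  ext w u
  simp only [XW, Matrix.diagonal_apply, eq_comm]

variable {q}

lemma mCompatible.div_eq_div {x : Fin n → R} (hx : mCompatible n l m q x) {xb : Fin l → R}
    (hxb : ∀ (j : Fin l) (i : Fin n), (i : ℕ) + 1 = nsum l m ((j : ℕ) + 1) →
      xb j = qInt q (m j) * x i) (hq : ∀ j, qInt q (m j) ≠ 0) (i : Fin n) :
    x i / q ^ (n - 1 - (i : ℕ)) = xb (blockLetter hmn i) /
      (q ^ (∑ t ∈ Finset.univ.filter fun t : Fin l => blockLetter hmn i < t, m t)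
        * qInt q (m (blockLetter hmn i))) := by
  obtain ⟨j, hj⟩ : ∃ j, blockLetter hmn i = j := ⟨_, rfl⟩
  obtain ⟨hle, hlt⟩ := (blockLetter_eq_iff hmn).mp hj
  have htail := nsum_succ_add_sum_gt (m := m) j
  let last : Fin n := ⟨nsum l m (j + 1) - 1, by omega⟩
  have hlast : (last : ℕ) + 1 = nsum l m (j + 1) := Nat.sub_add_cancel (by omega)
  have hblock : blockOf l m i = blockOf l m last :=
    Fin.ext_iff.mp (hj.trans ((blockLetter_eq_iff hmn).mpr (by omega)).symm)
  have hexp : ∑ t ∈ Finset.univ.filter (fun t : Fin l => j < t), m t = n - 1 - (last : ℕ) := by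
    omega
  rw [hx i last hblock, hj, hxb j last hlast, hexp, mul_comm (q ^ _),
    mul_div_mul_left _ _ (hq j)]

lemma isLumping_XSnP_XW {x : Fin n → R} (hx : mCompatible n l m q x) {xb : Fin l → R}
    (hxb : ∀ (j : Fin l) (i : Fin n), (i : ℕ) + 1 = nsum l m ((j : ℕ) + 1) →
      xb j = qInt q (m j) * x i) (hq : ∀ j, qInt q (m j) ≠ 0) :
    IsLumping (permWord hmn) (XSnP n q x) (XW n l m q xb) := by
  rw [XSnP_eq_diagonal, XW_eq_diagonal]
  refine IsLumping.diagonal fun π => ?_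
  split_ifs with h
  · exact hx.div_eq_div hmn hxb hq (π ⟨0, h⟩)
  · rfl

theorem isLumping_TSnP_TWm {x : Fin n → R} (hx : mCompatible n l m q x) {xb : Fin l → R}
    (hxb : ∀ (j : Fin l) (i : Fin n), (i : ℕ) + 1 = nsum l m ((j : ℕ) + 1) →
      xb j = qInt q (m j) * x i) (hq : ∀ j, qInt q (m j) ≠ 0) :
    IsLumping (permWord hmn) (TSnP n q x) (TWm n l m q xb) :=
  (IsLumping.sum _ (isLumping_prodGenP_prodGenW hmn q)).mul (isLumping_XSnP_XW hmn hx hxb hq)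

lemma qInt_natCast_ne_zero [CharZero R] {q m : ℕ} (hq : 0 < q) (hm : 0 < m) :
    qInt (q : R) m ≠ 0 := by
  have hpos : 0 < ∑ r ∈ Finset.range m, q ^ r :=
    Finset.sum_pos (fun r _ => pow_pos hq r) (Finset.nonempty_range_iff.mpr hm.ne')
  rw [qInt]
  exact_mod_cast hpos.ne'

end Words

section Borel

variable {F : Type} [Field F] {n : ℕ}

lemma diag_ne_zero_of_mem_Bsub {g : GLn F n} (hg : g ∈ Bsub F n) (i : Fin n) : g.1 i i ≠ 0 := by
  have hdet : g.1.det ≠ 0 := g.det_ne_zero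
  rw [Matrix.det_of_isUpperTriangular hg] at hdet
  exact Finset.prod_ne_zero_iff.mp hdet i (Finset.mem_univ i)

lemma transvGL_mem_Bsub {a b : Fin n} (h : a < b) (t : F) : transvGL F n a b h.ne t ∈ Bsub F n :=
  Matrix.blockTriangular_transvection h.le t

variable (F n) in
/-- The Borel subgroup `B⁻` of invertible lower triangular matrices, opposite to `Bsub`. -/
def oppBsub : Subgroup (GLn F n) where
  carrier := {g | lowerTri g.1}
  one_mem' := Matrix.blockTriangular_one (b := OrderDual.toDual)
  mul_mem' := fun {_ _} hg hh => Matrix.BlockTriangular.mul (b := OrderDual.toDual) hg hh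
  inv_mem' := fun {g} hg => by
    have := g.invertible
    change lowerTri (g⁻¹).1
    rw [Matrix.coe_units_inv]
    exact Matrix.blockTriangular_inv_of_blockTriangular (b := OrderDual.toDual) hg

lemma diag_ne_zero_of_mem_oppBsub {g : GLn F n} (hg : g ∈ oppBsub F n) (i : Fin n) :
    g.1 i i ≠ 0 := by
  have hdet : g.1.det ≠ 0 := g.det_ne_zero
  rw [Matrix.det_of_isLowerTriangular _ hg] at hdet
  exact Finset.prod_ne_zero_iff.mp hdet i (Finset.mem_univ i)

lemma transvGL_mem_oppBsub {a b : Fin n} (h : b < a) (t : F) :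
    transvGL F n a b h.ne' t ∈ oppBsub F n :=
  Matrix.blockTriangular_transvection (b := OrderDual.toDual) h.le t

end Borel

section Bruhat

lemma perm_eq_one_of_apply_le {α : Type*} [PartialOrder α] [WellFoundedLT α] (τ : Equiv.Perm α)
    (h : ∀ i, τ i ≤ i) : τ = 1 := by
  ext i
  induction i using WellFoundedLT.induction with
  | _ i ih => exact (h i).eq_of_not_lt fun hlt => hlt.ne (τ.injective (ih _ hlt))

lemma swap_lt_swap_of_covBy {n : ℕ} {a b i j : Fin n} (h : a ⋖ b) (hij : i < j)
    (hne : ¬(i = a ∧ j = b)) : Equiv.swap a b i < Equiv.swap a b j := by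
  have hab := Order.covBy_iff_add_one_eq.mp (Fin.covBy_iff.mp h)
  simp only [Equiv.swap_apply_def]
  split_ifs <;> simp only [Fin.ext_iff, Fin.lt_def] at * <;> omega

variable {F n}

lemma permGL_mul (π σ : Equiv.Perm (Fin n)) :
    permGL F n (π * σ) = permGL F n π * permGL F n σ :=
  Units.ext (permMat_mul F n π σ).symm

lemma permGL_one : permGL F n 1 = 1 := Units.ext (permMat_one F n)

lemma permGL_swap_mul_self (a b : Fin n) :
    permGL F n (Equiv.swap a b) * permGL F n (Equiv.swap a b) = 1 := by
  rw [← permGL_mul, Equiv.swap_mul_self, permGL_one]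

lemma permGL_mul_apply (σ : Equiv.Perm (Fin n)) (g : GLn F n) (i j : Fin n) :
    (permGL F n σ * g).1 i j = g.1 (σ⁻¹ i) j := by
  have hrow : ∀ k, permMat F n σ i k = if k = σ⁻¹ i then 1 else 0 := fun k => by
    simp only [permMat, Equiv.Perm.eq_inv_iff_eq]
  simp only [Units.val_mul, Matrix.mul_apply, permGL, hrow, ite_mul, one_mul, zero_mul,
    Finset.sum_ite_eq', Finset.mem_univ, if_true]

lemma mul_permGL_apply (σ : Equiv.Perm (Fin n)) (g : GLn F n) (i j : Fin n) :
    (g * permGL F n σ).1 i j = g.1 i (σ j) := by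
  simp only [Units.val_mul, Matrix.mul_apply, permGL, permMat, mul_ite, mul_one, mul_zero,
    Finset.sum_ite_eq, Finset.mem_univ, if_true]

lemma permGL_mul_transvGL (σ : Equiv.Perm (Fin n)) {a b : Fin n} (h : a ≠ b) (t : F) :
    permGL F n σ * transvGL F n a b h t =
      transvGL F n (σ a) (σ b) (σ.injective.ne h) t * permGL F n σ := by
  ext i j
  rw [permGL_mul_apply, mul_permGL_apply]
  simp only [transvGL, Matrix.transvection, Matrix.add_apply, Matrix.one_apply,
    Matrix.single_apply, Equiv.Perm.inv_eq_iff_eq, Equiv.Perm.eq_inv_iff_eq,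
    EmbeddingLike.apply_eq_iff_eq]

/-- The element `x_{ab}(u) s_{ab}` of `GL_n(F)`.  For adjacent `a` and `b`, these are
representatives of the cosets contained in the double coset `B s_{ab} B`. -/
def rootSwap {a b : Fin n} (h : a ≠ b) (u : F) : GLn F n :=
  transvGL F n a b h u * permGL F n (Equiv.swap a b)

lemma rootSwap_zero {a b : Fin n} (h : a ≠ b) :
    rootSwap h (0 : F) = permGL F n (Equiv.swap a b) := by
  have h_one : transvGL F n a b h 0 = 1 := Units.ext (Matrix.transvection_zero a b)
  rw [rootSwap, h_one, one_mul]

lemma permGL_swap_conj_mem_Bsub {a b : Fin n} (h : a ⋖ b) {g : GLn F n} (hg : g ∈ Bsub F n)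
    (hab : g.1 a b = 0) :
    permGL F n (Equiv.swap a b) * g * permGL F n (Equiv.swap a b) ∈ Bsub F n := by
  intro i j hji
  rw [mul_permGL_apply, permGL_mul_apply, Equiv.swap_inv]
  by_cases hne : j = a ∧ i = b
  · rw [hne.1, hne.2, Equiv.swap_apply_left, Equiv.swap_apply_right, hab]
  · exact hg _ _ (swap_lt_swap_of_covBy h hji hne)

lemma exists_mul_rootSwap_eq {a b : Fin n} (h : a ⋖ b) {g : GLn F n} (hg : g ∈ Bsub F n) (u : F) :
    ∃ c ∈ Bsub F n, g * rootSwap h.ne u =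
      rootSwap h.ne ((g.1 a a * u + g.1 a b) / g.1 b b) * c := by
  set u' := (g.1 a a * u + g.1 a b) / g.1 b b
  set s := permGL F n (Equiv.swap a b)
  set x := transvGL F n a b h.ne
  let c := (x u')⁻¹ * g * x u
  have hc : c ∈ Bsub F n :=
    mul_mem (mul_mem (inv_mem (transvGL_mem_Bsub h.lt u')) hg) (transvGL_mem_Bsub h.lt u)
  have hcab : c.1 a b = 0 := by
    change (Matrix.transvection a b (-u') * g.1 * Matrix.transvection a b u) a b = 0
    have hu' : u' * g.1 b b = g.1 a a * u + g.1 a b :=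
      div_mul_cancel₀ _ (diag_ne_zero_of_mem_Bsub hg b)
    rw [Matrix.mul_transvection_apply_same, Matrix.transvection_mul_apply_same,
      Matrix.transvection_mul_apply_same, hg b a h.lt]
    linear_combination -hu'
  refine ⟨s * c * s, permGL_swap_conj_mem_Bsub h hc hcab, ?_⟩
  calc g * (x u * s) = x u' * c * s := by simp only [c, mul_assoc, mul_inv_cancel_left]
    _ = x u' * (s * s) * c * s := by rw [permGL_swap_mul_self, mul_one]
    _ = x u' * s * (s * c * s) := by simp only [mul_assoc]

lemma exists_transvGL_eq_rootSwap_mul {a b : Fin n} (h : a < b) {t : F} (ht : t ≠ 0) :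
    ∃ c ∈ Bsub F n, transvGL F n b a h.ne' t = rootSwap h.ne t⁻¹ * c := by
  -- `!![1, 0; t, 1] = !![1, t⁻¹; 0, 1] * !![0, 1; 1, 0] * !![t, 1; 0, -t⁻¹]`
  set s := permGL F n (Equiv.swap a b)
  set x := transvGL F n a b h.ne t⁻¹
  set y := transvGL F n b a h.ne' t
  refine ⟨s * (x⁻¹ * y), fun i j hji => ?_, ?_⟩
  · rw [permGL_mul_apply, Equiv.swap_inv]
    change (Matrix.transvection a b (-t⁻¹) * Matrix.transvection b a t) (Equiv.swap a b i) j = 0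
    have hentry : ∀ (p q k l : Fin n) (u : F), Matrix.transvection p q u k l =
        (if k = l then 1 else 0) + if p = k ∧ q = l then u else 0 := fun p q k l u => by
      rw [Matrix.transvection, Matrix.add_apply, Matrix.one_apply, Matrix.single_apply]
    rcases eq_or_ne j a with rfl | hja
    · rw [Matrix.mul_transvection_apply_same]
      rcases eq_or_ne i b with rfl | hib
      · simp [hentry, h.ne, h.ne', ht]
      · simp [hentry, hib, hji.ne, hji.ne', Equiv.swap_apply_of_ne_of_ne hji.ne' hib]
    · rw [Matrix.mul_transvection_apply_of_ne _ _ _ _ hja]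
      rcases eq_or_ne i a with rfl | hia
      · simp [hentry, h.ne, (hji.trans h).ne']
      rcases eq_or_ne i b with rfl | hib
      · simp [hentry, hji.ne', Ne.symm hja]
      · simp [hentry, hji.ne', Ne.symm hia, Equiv.swap_apply_of_ne_of_ne hia hib]
  · rw [rootSwap]
    calc y = x * (s * s) * (x⁻¹ * y) := by rw [permGL_swap_mul_self, mul_one, mul_inv_cancel_left]
      _ = x * s * (s * (x⁻¹ * y)) := by simp only [mul_assoc]

lemma sum_mk_mul_rootSwap_congr {M : Type*} [AddCommMonoid M] {a b : Fin n} (h : a ⋖ b)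
    {g g' : GLn F n} (hg : (QuotientGroup.mk g : Cosets F n) = QuotientGroup.mk g')
    (v : Cosets F n → M) :
    ∑ u : F, v (QuotientGroup.mk (g * rootSwap h.ne u)) =
      ∑ u : F, v (QuotientGroup.mk (g' * rootSwap h.ne u)) := by
  obtain ⟨β, hβ, rfl⟩ : ∃ β ∈ Bsub F n, g = g' * β :=
    ⟨g'⁻¹ * g, QuotientGroup.eq.mp hg.symm, (mul_inv_cancel_left g' g).symm⟩
  -- `β` permutes the cosets `x_{ab}(u) s_{ab} B` by an affine substitution of `u`.
  have hinj : Function.Injective fun u => (β.1 a a * u + β.1 a b) / β.1 b b := fun u u' huu' => by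
    have ha := diag_ne_zero_of_mem_Bsub hβ a
    have hb := diag_ne_zero_of_mem_Bsub hβ b
    exact mul_left_cancel₀ ha (add_right_cancel ((div_left_inj' hb).mp huu'))
  refine Fintype.sum_bijective _ (Finite.injective_iff_bijective.mp hinj) _ _ fun u => ?_
  obtain ⟨c, hc, hβu⟩ := exists_mul_rootSwap_eq h hβ u
  rw [mul_assoc, hβu, ← mul_assoc, QuotientGroup.mk_mul_of_mem _ hc]

lemma inDC_mk_iff {π : Equiv.Perm (Fin n)} {g : GLn F n} :
    inDC F n π (QuotientGroup.mk g) ↔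
      ∃ l ∈ oppBsub F n, ∃ b ∈ Bsub F n, g = l * permGL F n π * b := by
  constructor
  · rintro ⟨l, b, hl, hb, hg⟩
    refine ⟨l, hl, b * ((l * permGL F n π * b)⁻¹ * g), ?_, by group⟩
    exact mul_mem hb (QuotientGroup.eq.mp hg.symm)
  · rintro ⟨l, hl, b, hb, rfl⟩
    exact ⟨l, b, hl, hb, rfl⟩

lemma inDC_iff {π : Equiv.Perm (Fin n)} {C : Cosets F n} :
    inDC F n π C ↔ ∃ l ∈ oppBsub F n, C = QuotientGroup.mk (l * permGL F n π) := by
  constructor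
  · rintro ⟨l, b, hl, hb, rfl⟩
    exact ⟨l, hl, QuotientGroup.mk_mul_of_mem _ hb⟩
  · rintro ⟨l, hl, rfl⟩
    exact inDC_mk_iff.mpr ⟨l, hl, 1, one_mem _, (mul_one _).symm⟩

lemma inDC.unique {π σ : Equiv.Perm (Fin n)} {C : Cosets F n} (hπ : inDC F n π C)
    (hσ : inDC F n σ C) : π = σ := by
  obtain ⟨l, hl, rfl⟩ := inDC_iff.mp hπ
  obtain ⟨l', hl', b, hb, hlb⟩ := inDC_mk_iff.mp hσ
  have hlow : l'⁻¹ * l ∈ oppBsub F n := mul_mem (inv_mem hl') hl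
  have hmul : l'⁻¹ * l * permGL F n π = permGL F n σ * b := by
    rw [mul_assoc, hlb]
    group
  have hle : ∀ j, (σ⁻¹ * π) j ≤ j := fun j => by
    by_contra! hlt
    have hdiag : (l'⁻¹ * l).1 (π j) (π j) = b.1 ((σ⁻¹ * π) j) j := by
      rw [← mul_permGL_apply, hmul, permGL_mul_apply, Equiv.Perm.mul_apply]
    exact diag_ne_zero_of_mem_oppBsub hlow (π j) (hdiag.trans (hb _ _ hlt))
  exact (inv_mul_eq_one.mp (perm_eq_one_of_apply_le _ hle)).symm

lemma inDC_mk_mul_rootSwap_of_gt {a b : Fin n} (h : a ≠ b) {π : Equiv.Perm (Fin n)}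
    (hπ : π b < π a) {l : GLn F n} (hl : l ∈ oppBsub F n) (u : F) :
    inDC F n (π * Equiv.swap a b) (QuotientGroup.mk (l * permGL F n π * rootSwap h u)) := by
  refine inDC_iff.mpr ⟨_, mul_mem hl (transvGL_mem_oppBsub hπ u), congrArg _ ?_⟩
  rw [rootSwap, ← mul_assoc, mul_assoc l, permGL_mul_transvGL, permGL_mul]
  simp only [mul_assoc]

lemma inDC_mk_mul_rootSwap_zero {a b : Fin n} (h : a ≠ b) (π : Equiv.Perm (Fin n))
    {l : GLn F n} (hl : l ∈ oppBsub F n) :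
    inDC F n (π * Equiv.swap a b) (QuotientGroup.mk (l * permGL F n π * rootSwap h 0)) :=
  inDC_iff.mpr ⟨l, hl, by rw [rootSwap_zero, permGL_mul, mul_assoc]⟩

lemma inDC_mk_mul_rootSwap_of_lt {a b : Fin n} (h : a < b) {π : Equiv.Perm (Fin n)}
    (hπ : π a < π b) {l : GLn F n} (hl : l ∈ oppBsub F n) {u : F} (hu : u ≠ 0) :
    inDC F n π (QuotientGroup.mk (l * permGL F n π * rootSwap h.ne u)) := by
  obtain ⟨c, hc, hcu⟩ := exists_transvGL_eq_rootSwap_mul h (inv_ne_zero hu)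
  rw [inv_inv] at hcu
  refine inDC_iff.mpr ⟨_, mul_mem hl (transvGL_mem_oppBsub hπ u⁻¹), ?_⟩
  rw [← QuotientGroup.mk_mul_of_mem _ hc, mul_assoc _ _ c, ← hcu, mul_assoc l,
    permGL_mul_transvGL, mul_assoc l]

lemma mem_closure_swap_covBy (σ : Equiv.Perm (Fin n)) :
    σ ∈ Submonoid.closure {τ | ∃ a b : Fin n, a ⋖ b ∧ τ = Equiv.swap a b} := by
  cases n with
  | zero => exact Subsingleton.elim 1 σ ▸ one_mem _
  | succ n =>
    have hle : Set.range (fun i : Fin n => Equiv.swap i.castSucc i.succ) ⊆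
        {τ | ∃ a b, a ⋖ b ∧ τ = Equiv.swap a b} := by
      rintro _ ⟨i, rfl⟩
      exact ⟨_, _, Fin.covBy_iff.mpr (Order.covBy_add_one (i : ℕ)), rfl⟩
    exact Submonoid.closure_mono hle
      (Equiv.Perm.mclosure_swap_castSucc_succ n ▸ Submonoid.mem_top σ)

lemma permGL_mem_of_permGL_swap_mem {H : Subgroup (GLn F n)}
    (hswap : ∀ a b : Fin n, a ⋖ b → permGL F n (Equiv.swap a b) ∈ H) (σ : Equiv.Perm (Fin n)) :
    permGL F n σ ∈ H := by
  induction mem_closure_swap_covBy σ using Submonoid.closure_induction with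
  | mem τ hτ =>
    obtain ⟨a, b, hab, rfl⟩ := hτ
    exact hswap a b hab
  | one => exact permGL_one (F := F) (n := n) ▸ one_mem H
  | mul τ ρ _ _ hτ hρ => exact permGL_mul (F := F) τ ρ ▸ mul_mem hτ hρ

lemma eq_top_of_Bsub_le_of_permGL_mem {H : Subgroup (GLn F n)} (hB : Bsub F n ≤ H)
    (hperm : ∀ σ, permGL F n σ ∈ H) : H = ⊤ := by
  have htransv : ∀ {a b : Fin n} (h : a ≠ b) (t : F), transvGL F n a b h t ∈ H :=
      fun {a b} h t => by
    rcases h.lt_or_gt with hab | hab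
    · exact hB (transvGL_mem_Bsub hab t)
    · have hconj := permGL_mul_transvGL (Equiv.swap a b) h.symm t
      simp only [Equiv.swap_apply_left, Equiv.swap_apply_right] at hconj
      rw [eq_mul_inv_of_mul_eq hconj.symm]
      exact mul_mem (mul_mem (hperm _) (hB (transvGL_mem_Bsub hab t))) (inv_mem (hperm _))
  refine H.eq_top_iff'.mpr fun g => ?_
  refine Matrix.diagonal_transvection_induction_of_det_ne_zero
    (fun M => ∀ g : GLn F n, g.1 = M → g ∈ H) g.1
    g.det_ne_zero ?_ ?_ ?_ g rfl
  · rintro D - g hg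
    exact hB fun i j hji => hg ▸ Matrix.diagonal_apply_ne D hji.ne'
  · rintro t g hg
    exact (Units.ext hg : g = transvGL F n t.i t.j t.hij t.c) ▸ htransv t.hij t.c
  · rintro M N hM hN ihM ihN g hg
    have hgMN : g = Matrix.GeneralLinearGroup.mkOfDetNeZero M hM *
      Matrix.GeneralLinearGroup.mkOfDetNeZero N hN := Units.ext hg
    exact hgMN ▸ mul_mem (ihM _ rfl) (ihN _ rfl)

lemma closure_Bsub_union_permGL_swap : Subgroup.closure ((Bsub F n : Set (GLn F n)) ∪
    {g | ∃ a b : Fin n, a ⋖ b ∧ g = permGL F n (Equiv.swap a b)}) = ⊤ :=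
  eq_top_of_Bsub_le_of_permGL_mem (fun _ hg => Subgroup.subset_closure (Or.inl hg)) <|
    permGL_mem_of_permGL_swap_mem fun a b hab => Subgroup.subset_closure (Or.inr ⟨a, b, hab, rfl⟩)

lemma exists_inDC_mk_mul_permGL_swap {a b : Fin n} (h : a ⋖ b) {π : Equiv.Perm (Fin n)}
    {g : GLn F n} (hg : inDC F n π (QuotientGroup.mk g)) :
    ∃ σ, inDC F n σ (QuotientGroup.mk (g * permGL F n (Equiv.swap a b))) := by
  obtain ⟨l, hl, c, hc, rfl⟩ := inDC_mk_iff.mp hg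
  obtain ⟨c', hc', hcc'⟩ := exists_mul_rootSwap_eq h hc 0
  rw [← rootSwap_zero h.ne, mul_assoc, hcc', ← mul_assoc, QuotientGroup.mk_mul_of_mem _ hc']
  generalize (c.1 a a * 0 + c.1 a b) / c.1 b b = u
  rcases (π.injective.ne h.ne).lt_or_gt with hlt | hgt
  · rcases eq_or_ne u 0 with rfl | hu
    · exact ⟨_, inDC_mk_mul_rootSwap_zero h.ne π hl⟩
    · exact ⟨_, inDC_mk_mul_rootSwap_of_lt h.lt hlt hl hu⟩
  · exact ⟨_, inDC_mk_mul_rootSwap_of_gt h.ne hgt hl u⟩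

lemma exists_inDC (C : Cosets F n) : ∃ π, inDC F n π C := by
  obtain ⟨g, rfl⟩ := QuotientGroup.mk_surjective C
  have hg : g ∈ Subgroup.closure ((Bsub F n : Set (GLn F n)) ∪
      {g | ∃ a b : Fin n, a ⋖ b ∧ g = permGL F n (Equiv.swap a b)}) :=
    closure_Bsub_union_permGL_swap (F := F) (n := n) ▸ Subgroup.mem_top g
  induction hg using Subgroup.closure_induction_right with
  | one => exact ⟨1, inDC_iff.mpr ⟨1, one_mem _, by rw [permGL_one, mul_one]⟩⟩
  | mul_right g _ h hh ih =>
    obtain ⟨π, hπ⟩ := ih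
    rcases hh with hh | ⟨a, b, hab, rfl⟩
    · exact ⟨π, by rwa [QuotientGroup.mk_mul_of_mem g hh]⟩
    · exact exists_inDC_mk_mul_permGL_swap hab hπ
  | mul_inv_cancel g _ h hh ih =>
    obtain ⟨π, hπ⟩ := ih
    rcases hh with hh | ⟨a, b, hab, rfl⟩
    · exact ⟨π, by rwa [QuotientGroup.mk_mul_of_mem g (inv_mem hh)]⟩
    · rw [inv_eq_of_mul_eq_one_left (permGL_swap_mul_self a b)]
      exact exists_inDC_mk_mul_permGL_swap hab hπ

variable (F n) in
/-- The permutation `π` for which the coset lies in the cell `[π] = B⁻ π B` of the Bruhat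
decomposition of `G/B`. -/
def cosetPerm (C : Cosets F n) : Equiv.Perm (Fin n) := (exists_inDC C).choose

lemma inDC_cosetPerm (C : Cosets F n) : inDC F n (cosetPerm F n C) C := (exists_inDC C).choose_spec

lemma inDC.cosetPerm_eq {π : Equiv.Perm (Fin n)} {C : Cosets F n} (h : inDC F n π C) :
    cosetPerm F n C = π :=
  (inDC_cosetPerm C).unique h

lemma cosetPerm_surjective : Function.Surjective (cosetPerm F n) := fun π =>
  ⟨_, (inDC_iff.mpr ⟨1, one_mem _, rfl⟩ : inDC F n π _).cosetPerm_eq⟩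

lemma pivotRow_eq_cosetPerm (h : 0 < n) (C : Cosets F n) :
    pivotRow F n C = cosetPerm F n C ⟨0, h⟩ := by
  have hC : inDC F n (cosetPerm F n C) (QuotientGroup.mk C.out) := by
    rw [QuotientGroup.out_eq']
    exact inDC_cosetPerm C
  generalize cosetPerm F n C = π at hC
  obtain ⟨l, hl, b, hb, hlb⟩ := inDC_mk_iff.mp hC
  have hcol : ∀ i, C.out.1 i ⟨0, h⟩ = l.1 i (π ⟨0, h⟩) * b.1 ⟨0, h⟩ ⟨0, h⟩ := fun i => by
    rw [hlb, Units.val_mul, Matrix.mul_apply, Finset.sum_eq_single ⟨0, h⟩, mul_permGL_apply]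
    · intro k _ hk
      rw [hb k ⟨0, h⟩ (lt_of_le_of_ne (Nat.zero_le k) (Ne.symm hk)), mul_zero]
    · simp
  refine IsLeast.csInf_eq ⟨⟨(π ⟨0, h⟩).isLt, ?_⟩, ?_⟩
  · rw [hcol]
    exact mul_ne_zero (diag_ne_zero_of_mem_oppBsub hl _) (diag_ne_zero_of_mem_Bsub hb _)
  · rintro i ⟨hi, hne⟩
    by_contra! hlt
    rw [hcol, hl ⟨i, hi⟩ _ hlt, zero_mul] at hne
    exact hne rfl

section Transition

variable {K : Type} [Field K] (k : ℕ)

lemma genGB_mulVec {a b : Fin n} (h : a ⋖ b) (v : Cosets F n → K) (g : GLn F n) :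
    (genGB F n K a).mulVec v (QuotientGroup.mk g) =
      ∑ u : F, v (QuotientGroup.mk (g * rootSwap h.ne u)) := by
  set C : Cosets F n := QuotientGroup.mk g
  rw [sum_mk_mul_rootSwap_congr h (QuotientGroup.out_eq' C).symm,
    ← Finset.add_sum_erase _ _ (Finset.mem_univ (0 : F)), rootSwap_zero]
  have hinv : ∑ u ∈ Finset.univ.erase (0 : F), v (QuotientGroup.mk (C.out * rootSwap h.ne u)) =
      ∑ t ∈ Finset.univ.erase (0 : F),
        v (QuotientGroup.mk (C.out * transvGL F n b a h.ne' t)) := by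
    refine Finset.sum_equiv (Equiv.inv F) (by simp) fun u hu => ?_
    obtain ⟨c, hc, hcu⟩ :=
      exists_transvGL_eq_rootSwap_mul h.lt (inv_ne_zero (Finset.ne_of_mem_erase hu))
    rw [inv_inv] at hcu
    rw [Equiv.inv_apply, hcu, ← mul_assoc, QuotientGroup.mk_mul_of_mem _ hc]
  have hcard : ∀ D : Cosets F n, ((Finset.univ.filter fun t : F => t ≠ 0 ∧
      (QuotientGroup.mk (C.out * transvGL F n b a h.ne' t) : Cosets F n) = D).card : K) =
      ∑ t ∈ Finset.univ.erase (0 : F),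
        if (QuotientGroup.mk (C.out * transvGL F n b a h.ne' t) : Cosets F n) = D then 1 else 0 :=
    fun D => by
      rw [Finset.sum_boole]
      congr 2
      ext t
      simp
  obtain ⟨hk, rfl⟩ := eq_mk_succ_of_covBy h
  simp only [Matrix.mulVec, dotProduct, genGB, dif_pos hk, hcard, add_mul,
    Finset.sum_add_distrib, Finset.sum_mul]
  rw [Finset.sum_comm]
  simp only [ite_mul, one_mul, zero_mul, Finset.sum_ite_eq, Finset.mem_univ, if_true, hinv]

lemma genGB_eq_zero (h : ¬ k + 1 < n) : genGB F n K k = 0 := by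
  ext C D
  simp only [genGB, dif_neg h, Matrix.zero_apply]

lemma isLumping_genGB_genMatP :
    IsLumping (cosetPerm F n) (genGB F n K k) (genMatP n (Fintype.card F : K) k) := by
  by_cases h : k + 1 < n
  swap
  · rw [genMatP_eq_zero _ k h, genGB_eq_zero k h]
    exact IsLumping.zero
  have hab := covBy_mk_succ k h
  set a : Fin n := ⟨k, Nat.lt_of_succ_lt h⟩
  set b : Fin n := ⟨k + 1, h⟩
  refine fun v => funext fun C => ?_
  obtain ⟨l, hl, hC⟩ := inDC_iff.mp (inDC_cosetPerm C)
  rw [Function.comp_apply, genMatP_mulVec _ hab]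
  conv_lhs => rw [hC]
  generalize cosetPerm F n C = π
  rw [genGB_mulVec hab]
  simp only [Function.comp_apply]
  rcases lt_or_ge (π b) (π a) with hgt | hle
  · simp only [(inDC_mk_mul_rootSwap_of_gt hab.ne hgt hl _).cosetPerm_eq, if_pos hgt,
      Finset.sum_const, Finset.card_univ, nsmul_eq_mul]
  · have hlt : π a < π b := hle.lt_of_ne (π.injective.ne hab.ne)
    rw [if_neg hle.not_gt, ← Finset.add_sum_erase _ _ (Finset.mem_univ (0 : F)),
      (inDC_mk_mul_rootSwap_zero hab.ne π hl).cosetPerm_eq]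
    have hstay : ∀ u ∈ Finset.univ.erase (0 : F),
        v (cosetPerm F n (QuotientGroup.mk (l * permGL F n π * rootSwap hab.ne u))) = v π :=
      fun u hu => by
        rw [(inDC_mk_mul_rootSwap_of_lt hab.lt hlt hl (Finset.ne_of_mem_erase hu)).cosetPerm_eq]
    rw [Finset.sum_congr rfl hstay, Finset.sum_const, Finset.card_erase_of_mem (Finset.mem_univ 0),
      Finset.card_univ, nsmul_eq_mul, Nat.cast_sub Fintype.card_pos, Nat.cast_one]

lemma isLumping_prodGenGB_prodGenP :
    IsLumping (cosetPerm F n) (prodGenGB F n K k) (prodGenP n (Fintype.card F : K) k) := by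
  induction k with
  | zero => exact IsLumping.one
  | succ k ih => exact (isLumping_genGB_genMatP k).mul ih

omit [DecidableEq F] in
lemma XGB_eq_diagonal (x : Fin n → K) :
    XGB F n K x = Matrix.diagonal fun C =>
      if h : pivotRow F n C < n then
        x ⟨pivotRow F n C, h⟩ / (Fintype.card F : K) ^ (n - 1 - pivotRow F n C)
      else 0 := by
  ext C D
  simp only [XGB, Matrix.diagonal_apply, eq_comm]

lemma isLumping_XGB_XSnP (x : Fin n → K) :
    IsLumping (cosetPerm F n) (XGB F n K x) (XSnP n (Fintype.card F : K) x) := by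
  rw [XGB_eq_diagonal, XSnP_eq_diagonal]
  refine IsLumping.diagonal fun C => ?_
  rcases n.eq_zero_or_pos with rfl | h
  · simp
  · simp only [pivotRow_eq_cosetPerm h C, Fin.is_lt, dif_pos, h]

theorem isLumping_TGB_TSnP (x : Fin n → K) :
    IsLumping (cosetPerm F n) (TGB F n K x) (TSnP n (Fintype.card F : K) x) :=
  (IsLumping.sum _ isLumping_prodGenGB_prodGenP).mul (isLumping_XGB_XSnP x)

end Transition

end Bruhat

/-- Let `q` be a prime power (the cardinality of the finite field `F`),
`m` a composition of `n` with positive parts, `x` `m`-compatible weights, and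
`x̄_j = [m_j]_q x_{n_j}`.  Then the eigenvalue sets satisfy
`Λ_{W_m} ⊆ Λ_{S_n} ⊆ Λ_{G/B}`, and diagonalizability of `T_{G/B}(q,x)` implies that of
`T_{S_n}(q,x)` and of `T_{W_m}(q,x̄)`. -/
theorem qTsetlin_eigenvalue_containment (F : Type) [Field F] [Fintype F] [DecidableEq F]
    (n l : ℕ) (m : Fin l → ℕ) (hm : ∀ j, 1 ≤ m j) (hmn : ∑ j, m j = n)
    (x : Fin n → ℂ) (hcompat : mCompatible n l m (Fintype.card F : ℂ) x)
    (xb : Fin l → ℂ)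
    (hxb : ∀ (j : Fin l) (iF : Fin n), (iF : ℕ) + 1 = nsum l m ((j : ℕ) + 1) →
      xb j = qInt (Fintype.card F : ℂ) (m j) * x iF) :
    (eigSet (TWm n l m (Fintype.card F : ℂ) xb) ⊆
        eigSet (TSnP n (Fintype.card F : ℂ) x) ∧
      eigSet (TSnP n (Fintype.card F : ℂ) x) ⊆ eigSet (TGB F n ℂ x)) ∧
    (IsDiagonalizable (TGB F n ℂ x) →
      IsDiagonalizable (TSnP n (Fintype.card F : ℂ) x) ∧
      IsDiagonalizable (TWm n l m (Fintype.card F : ℂ) xb)) := by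
  have hq : ∀ j, qInt (Fintype.card F : ℂ) (m j) ≠ 0 := fun j =>
    qInt_natCast_ne_zero Fintype.card_pos (hm j)
  have hW := isLumping_TSnP_TWm hmn hcompat hxb hq
  have hG := isLumping_TGB_TSnP (F := F) x
  refine ⟨⟨hW.eigSet_subset (permWord_surjective hmn), hG.eigSet_subset cosetPerm_surjective⟩,
    fun hdiag => ?_⟩
  have hS := hG.isDiagonalizable cosetPerm_surjective hdiag
  exact ⟨hS, hW.isDiagonalizable (permWord_surjective hmn) hS⟩

end QTsetlin
end
end
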